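/- arXiv:1609.03049 — 2 statements merged into one kernel-verified Lean document; each statement's English description precedes it below -/
import Mathlib

section
/- Let G be a graph whose bicircular lift matroid L(G) has at least two circuits, and let e, f be edges of G. Then {e, f} is a series pair of the matroid L(G) if and only if {e, f} is a series pair of the graph G. -/
/-!
The even edge sets of `G` (finite edge sets with all degrees even) form a vector space over
`GF(2)` under symmetric difference, and the cycles of `G` are exactly its minimal nonempty members
(`Graph.IsCycle.eq_of_even`, `Graph.isCycle_of_minimal`). A lift circuit is a minimal set
containing two distinct nonempty even sets, so everything takes place in this vector space.

Two facts carry the proof. First, every cycle `C` extends, inside `C ∪ D` for any other nonempty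
even set `D`, to a lift circuit (`Graph.IsCycle.exists_liftCircuit`). Second, as soon as there are
two lift circuits, the space has dimension at least three, so some nonempty even set avoids any two
prescribed edges (`Graph.exists_even_avoiding`). If `e, f` is a series pair of `L(G)` and a cycle
`C` contained `e` but not `f`, extending `C` by an even set avoiding both would give a lift circuit
with `e` but not `f`. Conversely, a lift circuit is a union of two cycles, so a series pair of `G`
is not separated by lift circuits, and a cycle through both edges extends to a lift circuit.
-/

open Set Matroid

universe u

namespace BLFormal

/-! ### Matroid preliminaries -/

/-- A circuit of a matroid: a minimal dependent set. -/
def Circuit {α : Type u} (M : Matroid α) (C : Set α) : Prop := Minimal M.Dep C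

/-- Deletion of a set of elements from a matroid. -/
def del {α : Type u} (M : Matroid α) (D : Set α) : Matroid α := M ↾ (M.E \ D)

/-- Contraction of a set of elements of a matroid, defined by duality. -/
def con {α : Type u} (M : Matroid α) (C : Set α) : Matroid α := (del M✶ C)✶

/-- `N` is a minor of `M` if it is obtained by a contraction followed by a deletion. -/
def IsMinor {α : Type u} (N M : Matroid α) : Prop := ∃ C D : Set α, N = del (con M C) D

/-- `N` is a proper (strict) minor of `M`. -/
def IsStrictMinor {α : Type u} (N M : Matroid α) : Prop := IsMinor N M ∧ N ≠ M

/-- The rank of a set `X` in the matroid `M`, as an extended natural number: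
the supremum of the cardinalities of the independent subsets of `X`. -/
noncomputable def eRk {α : Type u} (M : Matroid α) (X : Set α) : ℕ∞ :=
  ⨆ I : {I : Set α // M.Indep I ∧ I ⊆ X}, (I : Set α).encard

/-- The rank `r(M)` of a matroid, as an extended natural number. -/
noncomputable def eRank {α : Type u} (M : Matroid α) : ℕ∞ := eRk M M.E

/-- A loop of a matroid. -/
def MLoop {α : Type u} (M : Matroid α) (e : α) : Prop := M.Dep {e}

/-- A coloop of a matroid: a loop of the dual. -/
def MColoop {α : Type u} (M : Matroid α) (e : α) : Prop := MLoop M✶ e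

/-- A `k`-separation of a matroid: a partition `(X, Y)` of the ground set with
`|X|, |Y| ≥ k` and `r(X) + r(Y) - r(M) ≤ k - 1`. -/
def IsKSep {α : Type u} (M : Matroid α) (k : ℕ) (X Y : Set α) : Prop :=
  X ∪ Y = M.E ∧ Disjoint X Y ∧ (k : ℕ∞) ≤ X.encard ∧ (k : ℕ∞) ≤ Y.encard ∧
    eRk M X + eRk M Y ≤ eRank M + ((k - 1 : ℕ) : ℕ∞)

/-- A matroid is connected if it has no 1-separation. -/
def MConnected {α : Type u} (M : Matroid α) : Prop := ¬ ∃ X Y, IsKSep M 1 X Y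

/-- A matroid is 3-connected if it is connected and has no 2-separation. -/
def ThreeConnected {α : Type u} (M : Matroid α) : Prop :=
  MConnected M ∧ ¬ ∃ X Y, IsKSep M 2 X Y

/-- Two elements of a matroid form a series pair if no circuit contains exactly one
of them, and some circuit contains both. -/
def SeriesPair {α : Type u} (M : Matroid α) (e f : α) : Prop :=
  (∀ C, Circuit M C → (e ∈ C ↔ f ∈ C)) ∧ ∃ C, Circuit M C ∧ e ∈ C ∧ f ∈ C

/-- A series class: a maximal set in which every two elements form a series pair. -/
def IsSeriesClass {α : Type u} (M : Matroid α) (S : Set α) : Prop :=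
  Maximal (fun T => T.Nonempty ∧ ∀ e ∈ T, ∀ f ∈ T, SeriesPair M e f) S

/-- `N` is a cosimplification `co(M)` of `M`: it is obtained from `M` by contracting
all coloops and, in each series class, all but one element. -/
def IsCosimplification {α : Type u} (M N : Matroid α) : Prop :=
  ∃ D ⊆ M.E, N = con M D ∧ (∀ e, MColoop M e → e ∈ D) ∧
    ∀ S, IsSeriesClass M S → ∃ x ∈ S, S \ D = {x}

/-- `M` is isomorphic to the uniform matroid `U_{k, n}`: the ground set has `n` elements
and the circuits are precisely the `(k+1)`-element subsets of the ground set. -/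
def IsUnif {α : Type u} (k n : ℕ) (M : Matroid α) : Prop :=
  M.E.encard = n ∧ ∀ C, Circuit M C ↔ C ⊆ M.E ∧ C.encard = k + 1

/-- `M` has a `U_{2,4}`-minor. -/
def HasU24Minor {α : Type u} (M : Matroid α) : Prop := ∃ N, IsMinor N M ∧ IsUnif 2 4 N

/-- `M` is isomorphic to the direct sum `U_{2,4} ⊕ U_{0,1}` of `U_{2,4}` and a loop:
its ground set consists of a 4-element set `X` together with one further element `l`,
and its circuits are `{l}` and the 3-element subsets of `X`. -/
def IsU24PlusLoop {α : Type u} (M : Matroid α) : Prop :=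
  ∃ (X : Set α) (l : α), l ∉ X ∧ M.E = insert l X ∧ X.encard = 4 ∧
    ∀ C, Circuit M C ↔ (C = {l} ∨ (C ⊆ X ∧ C.encard = 3))

/-- `M` is isomorphic to the Fano matroid `F₇`: the rank-3 matroid represented over
`GF(2)` by the seven nonzero vectors of `GF(2)³`. -/
def IsFano {α : Type u} (M : Matroid α) : Prop :=
  ∃ v : α → (Fin 3 → ZMod 2),
    Set.BijOn v M.E {w | w ≠ 0} ∧
    ∀ I ⊆ M.E, (M.Indep I ↔ LinearIndependent (ZMod 2) (fun x : I => v x))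

/-! ### Graphs (with loops and parallel edges allowed) -/

/-- A graph on vertex type `V`, with edge set `E` living in the ambient edge type `α`;
each edge is sent to the unordered pair of its end-vertices. -/
structure Graph (V : Type u) (α : Type u) where
  E : Set α
  inc : α → Sym2 V

namespace Graph

variable {V : Type u} {α : Type u}

/-- The vertices incident with an edge set `C`. -/
def vertsOf (G : Graph V α) (C : Set α) : Set V := {v | ∃ e ∈ C, v ∈ G.inc e}

/-- The vertex set of a graph (we consider graphs without isolated vertices). -/
def verts (G : Graph V α) : Set V := G.vertsOf G.E

/-- Deletion of a set of edges from a graph. -/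
def delete (G : Graph V α) (D : Set α) : Graph V α := ⟨G.E \ D, G.inc⟩

/-- The degree of a vertex `v` in the edge set `C`, with loops counting twice. -/
noncomputable def deg (G : Graph V α) (C : Set α) (v : V) : ℕ :=
  {e ∈ C | v ∈ G.inc e}.ncard + {e ∈ C | G.inc e = Sym2.diag v}.ncard

/-- Two vertices are adjacent via an edge of `C`. -/
def AdjOn (G : Graph V α) (C : Set α) (u v : V) : Prop := ∃ e ∈ C, G.inc e = s(u, v)

/-- The subgraph with edge set `C` is connected. -/
def ConnectedOn (G : Graph V α) (C : Set α) : Prop :=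
  ∀ u ∈ G.vertsOf C, ∀ v ∈ G.vertsOf C, Relation.ReflTransGen (G.AdjOn C) u v

/-- `C` is a cycle of `G` : the edge set of a connected 2-regular subgraph. -/
def IsCycle (G : Graph V α) (C : Set α) : Prop :=
  C ⊆ G.E ∧ C.Finite ∧ C.Nonempty ∧ (∀ v ∈ G.vertsOf C, G.deg C v = 2) ∧ G.ConnectedOn C

/-- A graph is 2-edge-connected if each of its edges lies in a cycle. -/
def TwoEdgeConnected (G : Graph V α) : Prop := ∀ e ∈ G.E, ∃ C, G.IsCycle C ∧ e ∈ C

/-- A graph is connected if it has at least one vertex and any two of its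
vertices are joined by a path. -/
def Connected (G : Graph V α) : Prop := G.verts.Nonempty ∧ G.ConnectedOn G.E

/-- Delete a vertex from a graph (removing all edges incident with it). -/
def delVert (G : Graph V α) (v : V) : Graph V α := ⟨{e ∈ G.E | v ∉ G.inc e}, G.inc⟩

/-- A graph is 2-connected if it is connected and stays connected after the
deletion of any vertex. -/
def TwoConnected (G : Graph V α) : Prop :=
  G.Connected ∧ ∀ v ∈ G.verts, (G.delVert v).Connected

/-- `X` contains at least two (distinct) cycles of `G`. -/
def HasTwoCycles (G : Graph V α) (X : Set α) : Prop :=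
  ∃ C₁ C₂, G.IsCycle C₁ ∧ G.IsCycle C₂ ∧ C₁ ≠ C₂ ∧ C₁ ⊆ X ∧ C₂ ⊆ X

/-- The circuits of the bicircular lift matroid of `G`: edge sets containing at
least two cycles and minimal with this property. -/
def LiftCircuit (G : Graph V α) (X : Set α) : Prop :=
  Minimal (fun Y => Y ⊆ G.E ∧ G.HasTwoCycles Y) X

/-- Two edges of a graph form a series pair if no cycle contains exactly one of
them, and some cycle contains both. -/
def SeriesPair (G : Graph V α) (e f : α) : Prop :=
  (∀ C, G.IsCycle C → (e ∈ C ↔ f ∈ C)) ∧ ∃ C, G.IsCycle C ∧ e ∈ C ∧ f ∈ C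

end Graph

/-- `N` is the bicircular lift matroid `L(G)` of `G` : its ground set is `E(G)`
and its circuits are the lift circuits of `G`. -/
def IsLiftRep {V α : Type u} (G : Graph V α) (N : Matroid α) : Prop :=
  N.E = G.E ∧ ∀ C, Circuit N C ↔ G.LiftCircuit C

/-- `N` is the cycle matroid `M(G)` of `G` : its ground set is `E(G)` and its
circuits are the cycles of `G`. -/
def IsGraphicRep {V α : Type u} (G : Graph V α) (N : Matroid α) : Prop :=
  N.E = G.E ∧ ∀ C, Circuit N C ↔ G.IsCycle C

/-- A matroid is bicircular lift if it is (isomorphic to) `L(G)` for some graph `G`. -/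
def IsBicircularLift {α : Type u} (N : Matroid α) : Prop :=
  ∃ (V : Type u) (G : Graph V α), IsLiftRep G N

/-- A matroid is graphic if it is (isomorphic to) the cycle matroid of some graph. -/
def IsGraphic {α : Type u} (N : Matroid α) : Prop :=
  ∃ (V : Type u) (G : Graph V α), IsGraphicRep G N

/-- The class `BL-bar` of matroids that are graphic or bicircular lift. -/
def InBL {α : Type u} (N : Matroid α) : Prop := IsGraphic N ∨ IsBicircularLift N

/-- `M` is an excluded minor for the class `BL-bar`. -/
def ExcludedMinorBL {α : Type u} (M : Matroid α) : Prop :=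
  ¬ InBL M ∧ ∀ N, IsStrictMinor N M → InBL N

/-! ### Special graphs and subdivisions -/

/-- `G` is (a copy of) the complete graph `K₄`. -/
def IsK4 {V α : Type u} (G : Graph V α) : Prop :=
  ∃ v : Fin 4 → V, Function.Injective v ∧
    ∃ ed : {p : Sym2 (Fin 4) // ¬ p.IsDiag} → α, Function.Injective ed ∧
      G.E = Set.range ed ∧ ∀ p, G.inc (ed p) = Sym2.map v p.1

/-- `G` is (a copy of) the complete graph `K₅`. -/
def IsK5 {V α : Type u} (G : Graph V α) : Prop :=
  ∃ v : Fin 5 → V, Function.Injective v ∧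
    ∃ ed : {p : Sym2 (Fin 5) // ¬ p.IsDiag} → α, Function.Injective ed ∧
      G.E = Set.range ed ∧ ∀ p, G.inc (ed p) = Sym2.map v p.1

/-- `G` is (a copy of) the complete bipartite graph `K₃,₃`. -/
def IsK33 {V α : Type u} (G : Graph V α) : Prop :=
  ∃ a b : Fin 3 → V, Function.Injective a ∧ Function.Injective b ∧
    Set.range a ∩ Set.range b = ∅ ∧
    ∃ ed : Fin 3 × Fin 3 → α, Function.Injective ed ∧
      G.E = Set.range ed ∧ ∀ p, G.inc (ed p) = s(a p.1, b p.2)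

/-- `G` is (a copy of) the graph `K₂ⁿ` with two vertices joined by `n` parallel edges. -/
def IsK2n {V α : Type u} (n : ℕ) (G : Graph V α) : Prop :=
  ∃ u v : V, u ≠ v ∧ ∃ ed : Fin n → α, Function.Injective ed ∧
    G.E = Set.range ed ∧ ∀ i, G.inc (ed i) = s(u, v)

/-- `H` is obtained from `G` by subdividing a single edge. -/
def ElemSub {V α : Type u} (G H : Graph V α) : Prop :=
  ∃ e ∈ G.E, ∃ (f g : α) (u v w : V),
    G.inc e = s(u, v) ∧ w ∉ G.verts ∧ f ≠ g ∧
    f ∉ G.E \ {e} ∧ g ∉ G.E \ {e} ∧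
    H.E = (G.E \ {e}) ∪ {f, g} ∧
    H.inc f = s(u, w) ∧ H.inc g = s(w, v) ∧
    ∀ x ∈ G.E \ {e}, H.inc x = G.inc x

/-- `H` is a subdivision of `G` : it is obtained from `G` by repeatedly
subdividing edges. -/
def IsSubdivision {V α : Type u} (G H : Graph V α) : Prop :=
  Relation.ReflTransGen ElemSub G H

/-! ### 2-sums and simplification -/

/-- `N` is the 2-sum `N₁ ⊕₂ᵉ N₂` of `N₁` and `N₂` along `e`. -/
def Is2Sum {α : Type u} (N N₁ N₂ : Matroid α) (e : α) : Prop :=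
  N₁.E ∩ N₂.E = {e} ∧
  ¬ MLoop N₁ e ∧ ¬ MColoop N₁ e ∧ ¬ MLoop N₂ e ∧ ¬ MColoop N₂ e ∧
  N.E = (N₁.E ∪ N₂.E) \ {e} ∧
  ∀ C, Circuit N C ↔
    ((Circuit N₁ C ∧ e ∉ C) ∨ (Circuit N₂ C ∧ e ∉ C) ∨
      ∃ C₁ C₂, Circuit N₁ C₁ ∧ Circuit N₂ C₂ ∧ e ∈ C₁ ∧ e ∈ C₂ ∧
        C = (C₁ \ {e}) ∪ (C₂ \ {e}))

/-- `H` is a simplification `si(G)` of `G` : it is obtained from `G` by deleting all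
loops and all but one edge of each parallel class. -/
def IsSimplification {V α : Type u} (G H : Graph V α) : Prop :=
  H.inc = G.inc ∧ H.E ⊆ G.E ∧ (∀ e ∈ H.E, ¬ (G.inc e).IsDiag) ∧
    ∀ e ∈ G.E, ¬ (G.inc e).IsDiag → ∃! f, f ∈ H.E ∧ G.inc f = G.inc e

/-- `H` is 2-connected, or is obtained from a 2-connected graph and a single edge `K₂`
by identifying one end-vertex of the edge with a vertex of the 2-connected graph. -/
def TwoConnOrPendant {V α : Type u} (H : Graph V α) : Prop :=
  H.TwoConnected ∨
    ∃ (e : α) (u w : V), e ∈ H.E ∧ H.inc e = s(u, w) ∧ u ≠ w ∧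
      (H.delete {e}).TwoConnected ∧ u ∈ (H.delete {e}).verts ∧ w ∉ (H.delete {e}).verts

/-! ### Edge sets with all degrees even -/

namespace Graph

variable {V : Type u} {α : Type u}

open Classical in
/-- The contribution of the edge `e` to the degree of the vertex `v`: `2` for a loop at `v`,
`1` for any other edge at `v`, and `0` for an edge that misses `v`. -/
noncomputable def mult (G : Graph V α) (e : α) (v : V) : ℕ :=
  (if v ∈ G.inc e then 1 else 0) + (if G.inc e = Sym2.diag v then 1 else 0)

theorem deg_eq_sum (G : Graph V α) (D : Finset α) (v : V) :
    G.deg (D : Set α) v = ∑ e ∈ D, G.mult e v := by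
  classical
  have h (p : α → Prop) : {e ∈ (D : Set α) | p e}.ncard = ∑ e ∈ D, if p e then 1 else 0 := by
    rw [← Finset.card_filter, ← Set.ncard_coe_finset]
    congr 1
    ext x
    simp
  unfold deg mult
  rw [h, h, Finset.sum_add_distrib]
  congr!

theorem sum_mult (G : Graph V α) (e : α) (S : Finset V) (hS : ∀ v ∈ G.inc e, v ∈ S) :
    ∑ v ∈ S, G.mult e v = 2 := by
  classical
  unfold mult
  generalize G.inc e = z at hS ⊢
  induction z with
  | h a b =>
    have ha := hS a (by simp)
    have hb := hS b (by simp)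
    rw [Finset.sum_add_distrib, ← Finset.card_filter, ← Finset.card_filter]
    by_cases hab : a = b
    · subst hab
      have h1 : S.filter (fun v => v ∈ s(a, a)) = {a} := by
        ext x; simp; grind
      have h2 : S.filter (fun v => s(a, a) = Sym2.diag v) = {a} := by
        ext x; simp [Sym2.diag]; grind
      rw [h1, h2]; simp
    · have h1 : S.filter (fun v => v ∈ s(a, b)) = {a, b} := by
        ext x; simp; grind
      have h2 : S.filter (fun v => s(a, b) = Sym2.diag v) = ∅ := by
        ext x; simp [Sym2.diag]; grind
      rw [h1, h2, Finset.card_pair hab]; simp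

theorem one_le_mult (G : Graph V α) {e : α} {v : V} (h : v ∈ G.inc e) : 1 ≤ G.mult e v := by
  simp [mult, h]

theorem mult_eq_zero (G : Graph V α) {e : α} {v : V} (h : v ∉ G.inc e) : G.mult e v = 0 := by
  have h2 : G.inc e ≠ Sym2.diag v := by
    intro h'
    exact h (by rw [h']; simp [Sym2.diag])
  simp [mult, h, h2]

/-- A finite set of edges of `G` in which every vertex has even degree, that is, an element of
the cycle space of `G` over `GF(2)`. -/
def EvenSet (G : Graph V α) (D : Finset α) : Prop :=
  (D : Set α) ⊆ G.E ∧ ∀ v, Even (∑ e ∈ D, G.mult e v)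

open Classical in
theorem sum_symmDiff_parity (G : Graph V α) (A B : Finset α) (v : V) :
    Even (∑ e ∈ symmDiff A B, G.mult e v) ↔
      (Even (∑ e ∈ A, G.mult e v) ↔ Even (∑ e ∈ B, G.mult e v)) := by
  have h1 : ∑ e ∈ symmDiff A B, G.mult e v =
      ∑ e ∈ A \ B, G.mult e v + ∑ e ∈ B \ A, G.mult e v := by
    rw [← Finset.sum_union]
    · rfl
    · exact disjoint_sdiff_sdiff
  have h2 := Finset.sum_inter_add_sum_sdiff A B (fun e => G.mult e v)
  have h3 := Finset.sum_inter_add_sum_sdiff B A (fun e => G.mult e v)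
  rw [Finset.inter_comm] at h3
  rw [h1, ← h2, ← h3]
  simp only [Nat.even_add]
  tauto

open Classical in
theorem EvenSet.symmDiff {G : Graph V α} {A B : Finset α} (hA : G.EvenSet A)
    (hB : G.EvenSet B) : G.EvenSet (symmDiff A B) := by
  refine ⟨?_, fun v => ?_⟩
  · intro x hx
    have : x ∈ _root_.symmDiff A B := hx
    rw [Finset.mem_symmDiff] at this
    rcases this with h | h
    · exact hA.1 h.1
    · exact hB.1 h.1
  · rw [sum_symmDiff_parity]
    exact iff_of_true (hA.2 v) (hB.2 v)

open Classical in
theorem EvenSet.sdiff {G : Graph V α} {A B : Finset α} (hA : G.EvenSet A)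
    (hB : G.EvenSet B) (h : B ⊆ A) : G.EvenSet (A \ B) := by
  have := hA.symmDiff hB
  rwa [symmDiff_of_ge h] at this

/-! ### Cycles are the minimal nonempty even sets -/

/-- A nonempty even subset of a cycle is the whole cycle: at each of its vertices it has degree
two, hence uses all edges of the cycle there, and the cycle is connected. -/
theorem IsCycle.eq_of_even {G : Graph V α} {C D : Finset α} (hC : G.IsCycle (C : Set α))
    (hD : G.EvenSet D) (hne : D.Nonempty) (hDC : D ⊆ C) : D = C := by
  classical
  obtain ⟨-, -, -, hdeg, hconn⟩ := hC
  -- all edges of `C` at a vertex of `D` belong to `D`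
  have key : ∀ v ∈ G.vertsOf (D : Set α), ∀ e ∈ C, v ∈ G.inc e → e ∈ D := by
    intro v ⟨g, hg, hvg⟩ e he hve
    by_contra heD
    have hC2 := hdeg v ⟨g, hDC hg, hvg⟩
    rw [deg_eq_sum] at hC2
    have hsub : insert e D ⊆ C := Finset.insert_subset he hDC
    have h1 := Finset.sum_le_sum_of_subset (f := fun e => G.mult e v) hsub
    rw [Finset.sum_insert heD] at h1
    have h2 := G.one_le_mult hve
    have h3 := Finset.single_le_sum (f := fun e => G.mult e v) (fun _ _ => Nat.zero_le _) hg
    have h4 := G.one_le_mult hvg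
    have h5 := hD.2 v
    obtain ⟨k, hk⟩ := h5
    omega
  obtain ⟨g, hg⟩ := hne
  obtain ⟨u, hu⟩ : ∃ u, u ∈ G.inc g := ⟨_, Sym2.out_fst_mem _⟩
  have reach : ∀ w, Relation.ReflTransGen (G.AdjOn (C : Set α)) u w →
      w ∈ G.vertsOf (D : Set α) := by
    intro w hw
    induction hw with
    | refl => exact ⟨g, hg, hu⟩
    | tail _ h ih =>
      obtain ⟨e, he, hinc⟩ := h
      exact ⟨e, key _ ih e he (by simp [hinc]), by simp [hinc]⟩
  apply Finset.Subset.antisymm hDC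
  intro e he
  obtain ⟨w, hw⟩ : ∃ w, w ∈ G.inc e := ⟨_, Sym2.out_fst_mem _⟩
  exact key w (reach w (hconn u ⟨g, hDC hg, hu⟩ w ⟨e, he, hw⟩)) e he hw

theorem IsCycle.evenSet {G : Graph V α} {C : Finset α} (hC : G.IsCycle (C : Set α)) :
    G.EvenSet C := by
  obtain ⟨hE, -, -, hdeg, -⟩ := hC
  refine ⟨hE, fun v => ?_⟩
  by_cases hv : v ∈ G.vertsOf (C : Set α)
  · rw [← deg_eq_sum, hdeg v hv]; exact even_two
  · rw [Finset.sum_eq_zero]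
    · exact Even.zero
    · intro e he
      exact G.mult_eq_zero fun h => hv ⟨e, he, h⟩

/-- A minimal nonempty even set `D` is a cycle. It is connected because the edges in one component
form an even set. For 2-regularity, let `W` be the set of its vertices and fix `e₀ ∈ D`, `v₀ ∈ W`.
A subset of `D \ {e₀}` is determined by its odd-degree vertices in `W \ {v₀}`: two subsets with
equal data differ by an even set other than `D`, the degree at `v₀` being even by the handshake
lemma. Hence `|D| ≤ |W|`, while the degrees are even, positive and sum to `2|D|`. -/
theorem isCycle_of_minimal {G : Graph V α} {D : Finset α} (hD : G.EvenSet D)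
    (hne : D.Nonempty) (hmin : ∀ A ⊆ D, A.Nonempty → G.EvenSet A → A = D) :
    G.IsCycle (D : Set α) := by
  classical
  refine ⟨hD.1, D.finite_toSet, hne, ?_, ?_⟩
  · let W : Finset V := D.biUnion fun e => (G.inc e).toFinset
    have hW : ∀ v, v ∈ W ↔ v ∈ G.vertsOf (D : Set α) := by
      intro v; simp [W, vertsOf]
    have hinc : ∀ e ∈ D, ∀ v ∈ G.inc e, v ∈ W := fun e he v hv => (hW v).2 ⟨e, he, hv⟩
    have handshake : ∀ A ⊆ D, ∑ v ∈ W, ∑ e ∈ A, G.mult e v = 2 * A.card := by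
      intro A hA
      rw [Finset.sum_comm, Finset.sum_congr rfl fun e he => G.sum_mult e W (hinc e (hA he))]
      simp [mul_comm]
    obtain ⟨e₀, he₀⟩ := hne
    obtain ⟨v₀, hv₀⟩ : ∃ v, v ∈ G.inc e₀ := ⟨_, Sym2.out_fst_mem _⟩
    have hv₀W := hinc e₀ he₀ v₀ hv₀
    have hcard : (D.erase e₀).powerset.card ≤ (W.erase v₀).powerset.card := by
      apply Finset.card_le_card_of_injOn
        (fun A => (W.erase v₀).filter fun v => ¬ Even (∑ e ∈ A, G.mult e v))
      · intro A _
        exact Finset.mem_coe.2 (Finset.mem_powerset.2 (Finset.filter_subset _ _))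
      · intro A hA B hB hAB
        have hA' : A ⊆ D.erase e₀ := Finset.mem_powerset.1 (Finset.mem_coe.1 hA)
        have hB' : B ⊆ D.erase e₀ := Finset.mem_powerset.1 (Finset.mem_coe.1 hB)
        have hsub : symmDiff A B ⊆ D.erase e₀ := by
          intro x hx
          rw [Finset.mem_symmDiff] at hx
          rcases hx with h | h
          · exact hA' h.1
          · exact hB' h.1
        have hsubD := hsub.trans (Finset.erase_subset _ _)
        have hev1 : ∀ v ∈ W.erase v₀, Even (∑ e ∈ symmDiff A B, G.mult e v) := by
          intro v hv
          rw [sum_symmDiff_parity]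
          have := Finset.ext_iff.1 hAB v
          simp only [Finset.mem_filter, hv, true_and] at this
          exact not_iff_not.1 this
        have hev : G.EvenSet (symmDiff A B) := by
          refine ⟨fun x hx => hD.1 (hsubD hx), fun v => ?_⟩
          by_cases hv : v ∈ W
          · by_cases hvv : v = v₀
            · subst hvv
              have h1 := handshake _ hsubD
              rw [← Finset.add_sum_erase _ _ hv] at h1
              have h2 := Finset.even_sum _ hev1
              have h3 : Even (2 * (symmDiff A B).card) := even_two_mul _
              rw [← h1, Nat.even_add] at h3
              exact h3.2 h2
            · exact hev1 v (Finset.mem_erase.2 ⟨hvv, hv⟩)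
          · rw [Finset.sum_eq_zero]
            · exact Even.zero
            · intro e he
              exact G.mult_eq_zero fun h => hv (hinc e (hsubD he) v h)
        by_contra hne'
        have hne2 : (symmDiff A B).Nonempty := by
          rw [Finset.nonempty_iff_ne_empty]
          intro h
          exact hne' (symmDiff_eq_bot.1 h)
        have := hmin _ hsubD hne2 hev
        rw [this] at hsub
        exact absurd (hsub he₀) (by simp)
    rw [Finset.card_powerset, Finset.card_powerset, Finset.card_erase_of_mem he₀,
      Finset.card_erase_of_mem hv₀W, Nat.pow_le_pow_iff_right (by norm_num)] at hcard
    have hDW : D.card ≤ W.card := by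
      have h1 : 0 < W.card := Finset.card_pos.2 ⟨_, hv₀W⟩
      omega
    have htwo : ∀ v ∈ W, 2 ≤ ∑ e ∈ D, G.mult e v := by
      intro v hv
      obtain ⟨e, he, hve⟩ := (hW v).1 hv
      have h3 := Finset.single_le_sum (f := fun e => G.mult e v) (fun _ _ => Nat.zero_le _) he
      have h4 := G.one_le_mult hve
      obtain ⟨k, hk⟩ := hD.2 v
      omega
    have hsum : ∑ v ∈ W, 2 = ∑ v ∈ W, ∑ e ∈ D, G.mult e v := by
      apply le_antisymm (Finset.sum_le_sum htwo)
      rw [handshake D subset_rfl]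
      simp
      omega
    intro v hv
    rw [deg_eq_sum]
    exact ((Finset.sum_eq_sum_iff_of_le htwo).1 hsum v ((hW v).2 hv)).symm
  · intro u hu w hw
    let A : Finset α := D.filter fun e =>
      ∃ x ∈ G.inc e, Relation.ReflTransGen (G.AdjOn (D : Set α)) u x
    have hall : ∀ e ∈ A, ∀ x ∈ G.inc e, Relation.ReflTransGen (G.AdjOn (D : Set α)) u x := by
      intro e he x hx
      simp only [A, Finset.mem_filter] at he
      obtain ⟨heD, y, hy, hr⟩ := he
      by_cases hxy : x = y
      · rwa [hxy]
      · refine hr.tail ⟨e, heD, ?_⟩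
        exact ((Sym2.mem_and_mem_iff (Ne.symm hxy)).1 ⟨hy, hx⟩)
    have hAeven : G.EvenSet A := by
      refine ⟨fun x hx => hD.1 (Finset.filter_subset _ _ hx), fun v => ?_⟩
      by_cases hv : Relation.ReflTransGen (G.AdjOn (D : Set α)) u v
      · have : ∑ e ∈ A, G.mult e v = ∑ e ∈ D, G.mult e v := by
          apply Finset.sum_subset (Finset.filter_subset _ _)
          intro e he heA
          apply G.mult_eq_zero
          intro hve
          exact heA (Finset.mem_filter.2 ⟨he, v, hve, hv⟩)
        rw [this]
        exact hD.2 v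
      · rw [Finset.sum_eq_zero]
        · exact Even.zero
        · intro e he
          exact G.mult_eq_zero fun h => hv (hall e he v h)
    obtain ⟨e, he, hue⟩ := hu
    obtain ⟨g, hg, hwg⟩ := hw
    have hAD := hmin A (Finset.filter_subset _ _)
      ⟨e, Finset.mem_filter.2 ⟨he, u, hue, Relation.ReflTransGen.refl⟩⟩ hAeven
    exact hall g (hAD ▸ hg) w hwg

/-! ### Lift circuits in terms of even sets -/

theorem EvenSet.exists_cycle {G : Graph V α} {D : Finset α} (hD : G.EvenSet D)
    (hne : D.Nonempty) : ∃ C ⊆ D, G.IsCycle (C : Set α) := by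
  induction D using Finset.strongInduction with
  | H D ih =>
    by_cases h : ∀ A ⊆ D, A.Nonempty → G.EvenSet A → A = D
    · exact ⟨D, subset_rfl, isCycle_of_minimal hD hne h⟩
    · push Not at h
      obtain ⟨A, hAD, hA, hAe, hAne⟩ := h
      obtain ⟨C, hC, hCc⟩ := ih A (Finset.ssubset_iff_subset_ne.2 ⟨hAD, hAne⟩) hAe hA
      exact ⟨C, hC.trans hAD, hCc⟩

/-- A nonempty even set is a cycle or splits into a cycle and another nonempty even set. -/
theorem EvenSet.isCycle_or_hasTwoCycles {G : Graph V α} {D : Finset α} (hD : G.EvenSet D)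
    (hne : D.Nonempty) : G.IsCycle (D : Set α) ∨ G.HasTwoCycles (D : Set α) := by
  classical
  obtain ⟨C, hCD, hC⟩ := hD.exists_cycle hne
  by_cases h : C = D
  · exact Or.inl (h ▸ hC)
  · right
    have hne' : (D \ C).Nonempty := by
      rw [Finset.sdiff_nonempty]
      exact fun h' => h (Finset.Subset.antisymm hCD h')
    obtain ⟨C', hC'D, hC'⟩ := (hD.sdiff hC.evenSet hCD).exists_cycle hne'
    refine ⟨C, C', hC, hC', ?_, by exact_mod_cast hCD,
      by exact_mod_cast hC'D.trans Finset.sdiff_subset⟩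
    intro heq
    have heq' : C = C' := by exact_mod_cast heq
    obtain ⟨x, hx⟩ := hC.2.2.1
    have hx1 : x ∈ C := hx
    have := hC'D (heq' ▸ hx1)
    exact (Finset.mem_sdiff.1 this).2 hx1

theorem HasTwoCycles.mono {G : Graph V α} {X Y : Set α} (h : G.HasTwoCycles X) (hXY : X ⊆ Y) :
    G.HasTwoCycles Y := by
  obtain ⟨C₁, C₂, h1, h2, h3, h4, h5⟩ := h
  exact ⟨C₁, C₂, h1, h2, h3, h4.trans hXY, h5.trans hXY⟩

theorem hasTwoCycles_of_even {G : Graph V α} {A B : Finset α} {X : Set α} (hA : G.EvenSet A)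
    (hAne : A.Nonempty) (hB : G.EvenSet B) (hBne : B.Nonempty) (hAB : A ≠ B)
    (hAX : (A : Set α) ⊆ X) (hBX : (B : Set α) ⊆ X) : G.HasTwoCycles X := by
  rcases hA.isCycle_or_hasTwoCycles hAne with h1 | h1
  · rcases hB.isCycle_or_hasTwoCycles hBne with h2 | h2
    · exact ⟨A, B, h1, h2, by exact_mod_cast hAB, hAX, hBX⟩
    · exact h2.mono hBX
  · exact h1.mono hAX

theorem HasTwoCycles.exists_finset {G : Graph V α} {X : Set α} (h : G.HasTwoCycles X) :
    ∃ A B : Finset α, G.IsCycle (A : Set α) ∧ G.IsCycle (B : Set α) ∧ A ≠ B ∧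
      (A : Set α) ⊆ X ∧ (B : Set α) ⊆ X := by
  obtain ⟨C₁, C₂, h1, h2, h3, h4, h5⟩ := h
  lift C₁ to Finset α using h1.2.1
  lift C₂ to Finset α using h2.2.1
  exact ⟨C₁, C₂, h1, h2, by exact_mod_cast h3, h4, h5⟩

theorem IsCycle.nonempty {G : Graph V α} {C : Finset α} (hC : G.IsCycle (C : Set α)) :
    C.Nonempty := by
  exact_mod_cast hC.2.2.1

theorem LiftCircuit.subset_of_cycles {G : Graph V α} {X : Set α} (hX : G.LiftCircuit X)
    {A B : Finset α} (hA : G.IsCycle (A : Set α)) (hB : G.IsCycle (B : Set α)) (hAB : A ≠ B)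
    (hAX : (A : Set α) ⊆ X) (hBX : (B : Set α) ⊆ X) : X ⊆ (A : Set α) ∪ B :=
  hX.2 ⟨union_subset hA.1 hB.1, A, B, hA, hB, by exact_mod_cast hAB, subset_union_left,
    subset_union_right⟩ (union_subset hAX hBX)

theorem LiftCircuit.exists_cycles {G : Graph V α} {X : Set α} (hX : G.LiftCircuit X) :
    ∃ A B : Finset α, G.IsCycle (A : Set α) ∧ G.IsCycle (B : Set α) ∧ A ≠ B ∧
      X = (A : Set α) ∪ B := by
  obtain ⟨A, B, hA, hB, hAB, hAX, hBX⟩ := hX.1.2.exists_finset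
  exact ⟨A, B, hA, hB, hAB,
    (hX.subset_of_cycles hA hB hAB hAX hBX).antisymm (union_subset hAX hBX)⟩

/-- If `D` is a nonempty even set other than the cycle `C`, then `C` extends inside `C ∪ D` to a
lift circuit. Choosing `D` with `C ∪ D` as small as possible, the even subsets of `C ∪ D` are only
`∅`, `C`, `D` and `C ∆ D`; any two distinct nonempty ones have union
`C ∪ D`. -/
theorem IsCycle.exists_liftCircuit {G : Graph V α} {C D : Finset α}
    (hC : G.IsCycle (C : Set α)) (hD : G.EvenSet D) (hne : D.Nonempty) (hCD : D ≠ C) :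
    ∃ X, G.LiftCircuit X ∧ (C : Set α) ⊆ X ∧ X ⊆ (C : Set α) ∪ D := by
  classical
  induction hn : (C ∪ D).card using Nat.strong_induction_on generalizing D with
  | _ n ih =>
    by_cases hsmall : ∃ A : Finset α, G.EvenSet A ∧ A.Nonempty ∧ A ≠ C ∧ C ∪ A ⊂ C ∪ D
    · obtain ⟨A, hA, hAne, hAC, hlt⟩ := hsmall
      obtain ⟨X, hX, hCX, hXA⟩ := ih _ (hn ▸ Finset.card_lt_card hlt) hA hAne hAC rfl
      refine ⟨X, hX, hCX, hXA.trans ?_⟩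
      exact_mod_cast hlt.subset
    · refine ⟨(C : Set α) ∪ D, ?_, subset_union_left, subset_rfl⟩
      obtain ⟨x, hxD, hxC⟩ : ∃ x ∈ D, x ∉ C := by
        by_contra h
        push Not at h
        exact hCD (hC.eq_of_even hD hne h)
      -- an even subset of `C ∪ D` avoiding `x` would give a smaller union with `C`
      have havoid : ∀ A, G.EvenSet A → A ⊆ C ∪ D → x ∉ A → A = ∅ ∨ A = C := by
        intro A hA hAs hxA
        by_contra h
        push Not at h
        refine hsmall ⟨A, hA, h.1, h.2, ?_⟩
        rw [Finset.ssubset_iff_of_subset (Finset.union_subset Finset.subset_union_left hAs)]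
        exact ⟨x, Finset.mem_union_right _ hxD, by simp [hxC, hxA]⟩
      have hclass : ∀ A, G.EvenSet A → A ⊆ C ∪ D →
          A = ∅ ∨ A = C ∨ A = D ∨ A = symmDiff C D := by
        intro A hA hAs
        by_cases hxA : x ∈ A
        · have hsub : symmDiff A D ⊆ C ∪ D := by
            intro y hy
            rw [Finset.mem_symmDiff] at hy
            rcases hy with hy | hy
            · exact hAs hy.1
            · exact Finset.mem_union_right _ hy.1
          rcases havoid _ (hA.symmDiff hD) hsub (by simp [Finset.mem_symmDiff, hxA, hxD])
            with h | h
          · exact Or.inr (Or.inr (Or.inl (symmDiff_eq_bot.1 h)))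
          · right; right; right
            rw [← h, symmDiff_symmDiff_cancel_right]
        · rcases havoid A hA hAs hxA with h | h
          · exact Or.inl h
          · exact Or.inr (Or.inl h)
      refine ⟨⟨union_subset hC.1 hD.1, hasTwoCycles_of_even hC.evenSet hC.nonempty hD hne
        hCD.symm subset_union_left subset_union_right⟩, ?_⟩
      rintro Y ⟨-, hY⟩ hYX
      obtain ⟨A, B, hA, hB, hAB, hAY, hBY⟩ := hY.exists_finset
      have hA1 := hclass A hA.evenSet (by exact_mod_cast hAY.trans hYX)
      have hB1 := hclass B hB.evenSet (by exact_mod_cast hBY.trans hYX)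
      have hAne := hA.nonempty.ne_empty
      have hBne := hB.nonempty.ne_empty
      intro y hy
      have hy' : y ∈ C ∨ y ∈ D := by simpa using hy
      have : y ∈ A ∨ y ∈ B := by
        have := Finset.mem_symmDiff (a := y) (s := C) (t := D)
        rcases hA1 with rfl | rfl | rfl | rfl <;> rcases hB1 with rfl | rfl | rfl | rfl <;> tauto
      exact this.elim (fun h => hAY h) (fun h => hBY h)

/-- If there are two lift circuits, any two edges are avoided by some nonempty even set.
Otherwise membership of `e` and `f` determines an even set, so every even set lies in the span of
any two distinct nonempty ones, and all lift circuits coincide. -/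
theorem exists_even_avoiding {G : Graph V α} {X Y : Set α} (hX : G.LiftCircuit X)
    (hY : G.LiftCircuit Y) (hXY : X ≠ Y) (e f : α) :
    ∃ D : Finset α, G.EvenSet D ∧ D.Nonempty ∧ e ∉ D ∧ f ∉ D := by
  classical
  by_contra hcon
  push Not at hcon
  have hzero : ∀ D : Finset α, G.EvenSet D → e ∉ D → f ∉ D → D = ∅ := by
    intro D hD he hf
    by_contra h
    exact hf (hcon D hD (Finset.nonempty_iff_ne_empty.2 h) he)
  obtain ⟨A, B, hA, hB, hAB, rfl⟩ := hX.exists_cycles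
  have hsub : ∀ D : Finset α, G.EvenSet D → (D : Set α) ⊆ (A : Set α) ∪ B := by
    intro D hD
    have hA' := hA.evenSet
    have hB' := hB.evenSet
    have z1 := hzero A hA'
    have z2 := hzero B hB'
    have z3 := hzero _ (hA'.symmDiff hB')
    have z4 := hzero _ hD
    have z5 := hzero _ (hD.symmDiff hA')
    have z6 := hzero _ (hD.symmDiff hB')
    have z7 := hzero _ (hD.symmDiff (hA'.symmDiff hB'))
    have hS : ∀ P Q : Finset α, symmDiff P Q = ∅ ↔ P = Q := fun P Q => symmDiff_eq_bot
    have hAne := hA.nonempty.ne_empty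
    have hBne := hB.nonempty.ne_empty
    simp only [hS, Finset.mem_symmDiff] at z3 z5 z6 z7
    have h : D = ∅ ∨ D = A ∨ D = B ∨ D = symmDiff A B := by
      clear hcon hzero hX hXY hY hS
      by_cases e ∈ A <;> by_cases e ∈ B <;> by_cases e ∈ D <;>
        by_cases f ∈ A <;> by_cases f ∈ B <;> by_cases f ∈ D <;> simp_all
    rcases h with rfl | rfl | rfl | rfl
    · simp
    · exact subset_union_left
    · exact subset_union_right
    · intro y hy
      have : y ∈ symmDiff A B := hy
      rw [Finset.mem_symmDiff] at this
      rcases this with h | h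
      · exact Or.inl h.1
      · exact Or.inr h.1
  obtain ⟨A', B', hA', hB', hAB', rfl⟩ := hY.exists_cycles
  have hle := union_subset (hsub A' hA'.evenSet) (hsub B' hB'.evenSet)
  exact hXY ((hX.2 hY.1 hle).antisymm hle)

/-- If every lift circuit through `e` passes through `f`, so does every cycle through `e`: a cycle
containing `e` but not `f` extends, using an even set avoiding both, to a lift circuit containing
`e` but not `f`. -/
theorem mem_of_cycle {G : Graph V α} {X Y : Set α} (hX : G.LiftCircuit X)
    (hY : G.LiftCircuit Y) (hXY : X ≠ Y) {e f : α}
    (hef : ∀ Z, G.LiftCircuit Z → e ∈ Z → f ∈ Z) {C : Set α} (hC : G.IsCycle C) (he : e ∈ C) :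
    f ∈ C := by
  by_contra hf
  lift C to Finset α using hC.2.1
  obtain ⟨D, hD, hne, heD, hfD⟩ := exists_even_avoiding hX hY hXY e f
  obtain ⟨Z, hZ, hCZ, hZC⟩ := hC.exists_liftCircuit hD hne (by rintro rfl; exact heD he)
  rcases hZC (hef Z hZ (hCZ he)) with h | h
  · exact hf h
  · exact hfD h

end Graph

theorem statement_1 {V α : Type u} (G : Graph V α) (N : Matroid α)
    (hrep : IsLiftRep G N)
    (htwo : ∃ C₁ C₂, Circuit N C₁ ∧ Circuit N C₂ ∧ C₁ ≠ C₂)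
    (e f : α) (he : e ∈ G.E) (hf : f ∈ G.E) :
    SeriesPair N e f ↔ G.SeriesPair e f := by
  obtain ⟨-, hcirc⟩ := hrep
  obtain ⟨X, Y, hX, hY, hXY⟩ := htwo
  simp only [SeriesPair, Graph.SeriesPair, hcirc] at hX hY ⊢
  constructor
  · rintro ⟨hiff, Z, hZ, heZ, hfZ⟩
    have hcyc : ∀ C, G.IsCycle C → (e ∈ C ↔ f ∈ C) := fun C hC =>
      ⟨Graph.mem_of_cycle hX hY hXY (fun Z hZ => (hiff Z hZ).1) hC,
        Graph.mem_of_cycle hX hY hXY (fun Z hZ => (hiff Z hZ).2) hC⟩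
    refine ⟨hcyc, ?_⟩
    obtain ⟨A, B, hA, hB, -, rfl⟩ := hZ.exists_cycles
    rcases heZ with h | h
    · exact ⟨A, hA, h, (hcyc A hA).1 h⟩
    · exact ⟨B, hB, h, (hcyc B hB).1 h⟩
  · rintro ⟨hiff, C, hC, heC, hfC⟩
    constructor
    · intro Z hZ
      obtain ⟨A, B, hA, hB, -, rfl⟩ := hZ.exists_cycles
      exact or_congr (hiff A hA) (hiff B hB)
    · lift C to Finset α using hC.2.1
      obtain ⟨A, B, hA, hB, hAB, -⟩ := hX.exists_cycles
      obtain ⟨D, hD, hDC⟩ : ∃ D : Finset α, G.IsCycle (D : Set α) ∧ D ≠ C := by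
        by_cases h : A = C
        · exact ⟨B, hB, fun h' => hAB (h.trans h'.symm)⟩
        · exact ⟨A, hA, h⟩
      obtain ⟨Z, hZ, hCZ, -⟩ := hC.exists_liftCircuit hD.evenSet hD.nonempty hDC
      exact ⟨Z, hZ, hCZ heC, hCZ hfC⟩

end BLFormal
end

section
/- The matroid M*(K_5), the dual of the cycle matroid of the complete graph K_5, is an excluded minor of \overline{BL}; in particular, there is no graph G with L(G) isomorphic to M*(K_5). -/
/-!
Identify the elements of `N = M*(K₅)` with the ten edges of `K₅`. All matroids involved are binary,
and are handled through subspaces of `GF(2)`-vectors indexed by the elements: `Rep M Z` says that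
a set is dependent in `M` exactly when it contains the support of a nonzero vector of `Z`. A cycle
matroid is represented by the cycle space of the graph (`rep_of_graphic`, `graphic_of_rep`), and the
dual matroid by the orthogonal space (`Rep.dual`). Hence a set is dependent in `N` if and only if
it contains the support of a nonzero edge cut of `K₅` (`CutRep`, `cutRep_of_enum`).

* `N` is not bicircular lift. Suppose `N = L(G)`. If a set contains two cycles of `G`, then for
  each `f` it contains a cycle avoiding `f`. Let `ab` be an edge of `K₅` and `c` a third vertex.
  The stars of `a` and `b` are dependent, so the star of `a` without `ac` and the star of `b`
  without `bc` both contain cycles of `G`. The union of these two sets is independent in `N`, so the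
  two cycles coincide, and the edge `ab`, being the only common element, is a loop of `G`. Doing this
  for two edges `ab` gives two loops of `G`, that is, a two-element dependent set of `N`; but `K₅` has
  no edge cut of size at most two.

* `N` is not graphic. Suppose `N = M(H)`. As `K₅` is simple, every nonempty cut of `H` has at least
  three edges, and `H` has no loops, so all degrees of `H` are at least three and `H` has at most
  `20 / 3` vertices. Then six edges of `H` contain a cycle, although the complement of a star of
  `K₅` is an independent set of size six.

* Every proper minor of `N` is graphic. Graphic matroids are closed under minors
  (`IsGraphic.del`, `IsGraphic.contract`), and by symmetry of `K₅` only one deletion and one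
  contraction of a single element remain: `N ＼ e` is the cycle matroid of `K₄` with the edges of a
  triangle subdivided, and `N ／ e` is the cycle matroid of the triangular prism.
-/

open Set Matroid

universe u

namespace BLFormal

/-! ### Incidence vectors and the cycle space over `ZMod 2` -/

/-- The number of ends of the edge `p` equal to `v`: a loop at `v` counts twice. -/
noncomputable def cnt {V : Type u} (v : V) (p : Sym2 V) : ℕ :=
  open Classical in
  Sym2.lift ⟨fun a b => (if v = a then 1 else 0) + (if v = b then 1 else 0),
    fun a b => add_comm _ _⟩ p

lemma cnt_mk {V : Type u} (v a b : V) [Decidable (v = a)] [Decidable (v = b)] :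
    cnt v s(a, b) = (if v = a then 1 else 0) + (if v = b then 1 else 0) := by
  simp only [cnt, Sym2.lift_mk]
  congr

lemma cnt_eq_zero {V : Type u} {v : V} {p : Sym2 V} (h : v ∉ p) : cnt v p = 0 := by
  classical
  induction p with | _ a b => ?_
  simp only [Sym2.mem_iff, not_or] at h
  simp [cnt_mk, h.1, h.2]

lemma cnt_pos {V : Type u} {v : V} {p : Sym2 V} (h : v ∈ p) : 1 ≤ cnt v p := by
  classical
  induction p with | _ a b => ?_
  simp only [Sym2.mem_iff] at h
  rw [cnt_mk]
  rcases h with rfl | rfl <;> simp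

lemma sum_cnt {V : Type u} {S : Finset V} {p : Sym2 V} (h : ∀ v ∈ p, v ∈ S) :
    ∑ v ∈ S, cnt v p = 2 := by
  classical
  induction p with | _ a b => ?_
  simp only [Sym2.mem_iff, forall_eq_or_imp, forall_eq] at h
  simp [cnt_mk, Finset.sum_add_distrib, h.1, h.2]

lemma deg_eq_sum {V α : Type u} (G : Graph V α) (X : Finset α) (v : V) :
    G.deg X v = ∑ e ∈ X, cnt v (G.inc e) := by
  classical
  have h1 : {e ∈ (X : Set α) | v ∈ G.inc e} = ((X.filter (fun e => v ∈ G.inc e) : Finset α) : Set α) := by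
    ext e; simp
  have h2 : {e ∈ (X : Set α) | G.inc e = Sym2.diag v} =
      ((X.filter (fun e => G.inc e = Sym2.diag v) : Finset α) : Set α) := by
    ext e; simp
  rw [Graph.deg, h1, h2, Set.ncard_coe_finset, Set.ncard_coe_finset, Finset.card_filter,
    Finset.card_filter, ← Finset.sum_add_distrib]
  refine Finset.sum_congr rfl fun e _ => ?_
  generalize G.inc e = p
  induction p with | _ a b => ?_
  rw [cnt_mk]
  simp only [Sym2.mem_iff, Sym2.diag, Sym2.eq_iff]
  by_cases ha : v = a <;> by_cases hb : v = b <;> simp [ha, hb, eq_comm] <;> grind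

/-- The cycle space over `ZMod 2` of the graph with edge set `F` and incidence map `inc`:
the vectors supported on `F` with zero boundary at each vertex. -/
noncomputable def cyc {V α : Type u} (inc : α → Sym2 V) (F : Finset α) :
    Submodule (ZMod 2) (α → ZMod 2) where
  carrier := {z | (∀ e ∉ F, z e = 0) ∧ ∀ v, ∑ e ∈ F, z e * (cnt v (inc e) : ZMod 2) = 0}
  add_mem' := by
    rintro a b ⟨ha, ha'⟩ ⟨hb, hb'⟩
    refine ⟨fun e he => by simp [ha e he, hb e he], fun v => ?_⟩
    simp [add_mul, Finset.sum_add_distrib, ha' v, hb' v]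
  zero_mem' := by simp
  smul_mem' := by
    rintro c a ⟨ha, ha'⟩
    refine ⟨fun e he => by simp [ha e he], fun v => ?_⟩
    simp [mul_assoc, ← Finset.mul_sum, ha' v]

lemma mem_cyc {V α : Type u} {inc : α → Sym2 V} {F : Finset α} {z : α → ZMod 2} :
    z ∈ cyc inc F ↔
      (∀ e ∉ F, z e = 0) ∧ ∀ v, ∑ e ∈ F, z e * (cnt v (inc e) : ZMod 2) = 0 := Iff.rfl

/-- The indicator vector of a finite set of edges. -/
noncomputable def chi {α : Type u} (X : Finset α) : α → ZMod 2 :=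
  open Classical in fun e => if e ∈ X then 1 else 0

lemma chi_of_mem {α : Type u} {X : Finset α} {e : α} (h : e ∈ X) : chi X e = 1 := by simp [chi, h]

lemma chi_of_notMem {α : Type u} {X : Finset α} {e : α} (h : e ∉ X) : chi X e = 0 := by simp [chi, h]

lemma eq_chi {α : Type u} {X : Finset α} {z : α → ZMod 2} (h : ∀ e, z e ≠ 0 ↔ e ∈ X) :
    z = chi X := by
  funext e
  have h01 : ∀ a : ZMod 2, a ≠ 0 → a = 1 := by decide
  by_cases he : e ∈ X
  · rw [chi_of_mem he]; exact h01 _ ((h e).2 he)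
  · rw [chi_of_notMem he]; by_contra h0; exact he ((h e).1 h0)

lemma chi_mem_cyc {V α : Type u} {G : Graph V α} {F X : Finset α} (hX : X ⊆ F) :
    chi X ∈ cyc G.inc F ↔ ∀ v, Even (G.deg X v) := by
  classical
  have key : ∀ v, ∑ e ∈ F, chi X e * (cnt v (G.inc e) : ZMod 2) = (G.deg X v : ZMod 2) := by
    intro v
    rw [deg_eq_sum, Nat.cast_sum, ← Finset.sum_subset hX]
    · exact Finset.sum_congr rfl fun e he => by simp [chi_of_mem he]
    · intro e _ he; simp [chi_of_notMem he]
  rw [mem_cyc]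
  simp only [key, ZMod.natCast_eq_zero_iff_even]
  exact ⟨fun h => h.2, fun h => ⟨fun e he => chi_of_notMem fun h' => he (hX h'), h⟩⟩

lemma deg_pos {V α : Type u} {G : Graph V α} {X : Finset α} {v : V}
    (hv : v ∈ G.vertsOf X) : 1 ≤ G.deg X v := by
  obtain ⟨e, he, hve⟩ := hv
  rw [deg_eq_sum]
  exact (cnt_pos hve).trans
    (Finset.single_le_sum (f := fun e => cnt v (G.inc e)) (fun _ _ => Nat.zero_le _) he)

lemma deg_eq_zero {V α : Type u} {G : Graph V α} {X : Finset α} {v : V}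
    (hv : v ∉ G.vertsOf X) : G.deg X v = 0 := by
  rw [deg_eq_sum]
  exact Finset.sum_eq_zero fun e he => cnt_eq_zero fun h => hv ⟨e, he, h⟩

/-- A subgraph with at least as many edges as vertices carries a nonzero cycle-space vector:
one of the vertex conditions follows from the others, so there are fewer equations than
unknowns. -/
lemma exists_cyc_of_card {V α : Type u} (inc : α → Sym2 V) {F X : Finset α} (hXF : X ⊆ F)
    (S : Finset V) (hS : ∀ e ∈ X, ∀ v ∈ inc e, v ∈ S) (hne : X.Nonempty)
    (hcard : S.card ≤ X.card) :
    ∃ z ∈ cyc inc F, z ≠ 0 ∧ ∀ e ∉ X, z e = 0 := by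
  classical
  obtain ⟨v₀, hv₀⟩ : ∃ v, v ∈ S := by
    obtain ⟨e, he⟩ := hne
    exact ⟨(inc e).out.1, hS e he _ (Sym2.out_fst_mem _)⟩
  let L : (X → ZMod 2) →ₗ[ZMod 2] (↥(S.erase v₀) → ZMod 2) :=
    { toFun := fun x v => ∑ e : X, x e * (cnt v.1 (inc e) : ZMod 2)
      map_add' := fun x y => by
        funext v; simp [add_mul, Finset.sum_add_distrib]
      map_smul' := fun c x => by
        funext v; simp [mul_assoc, Finset.mul_sum] }
  have hker : LinearMap.ker L ≠ ⊥ := by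
    apply LinearMap.ker_ne_bot_of_finrank_lt
    rw [Module.finrank_fintype_fun_eq_card, Module.finrank_fintype_fun_eq_card,
      Fintype.card_coe, Fintype.card_coe, Finset.card_erase_of_mem hv₀]
    have := hne.card_pos
    omega
  obtain ⟨x, hx, hx0⟩ := (Submodule.ne_bot_iff _).1 hker
  let z : α → ZMod 2 := fun e => if h : e ∈ X then x ⟨e, h⟩ else 0
  have hsum : ∀ v, ∑ e ∈ F, z e * (cnt v (inc e) : ZMod 2) =
      ∑ e : X, x e * (cnt v (inc e) : ZMod 2) := by
    intro v
    rw [← Finset.sum_subset hXF (fun e _ he => by simp [z, he]), ← Finset.sum_coe_sort X]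
    exact Finset.sum_congr rfl fun e _ => by simp [z]
  have hv : ∀ v, v ≠ v₀ → ∑ e : X, x e * (cnt v (inc e) : ZMod 2) = 0 := by
    intro v hv
    by_cases hvS : v ∈ S
    · exact congrFun (LinearMap.mem_ker.1 hx) ⟨v, Finset.mem_erase.2 ⟨hv, hvS⟩⟩
    · exact Finset.sum_eq_zero fun e _ => by
        rw [cnt_eq_zero fun h => hvS (hS e e.2 v h)]; simp
  refine ⟨z, mem_cyc.2 ⟨fun e he => ?_, fun v => ?_⟩, fun h0 => hx0 ?_, fun e he => ?_⟩
  · have : e ∉ X := fun h => he (hXF h)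
    simp [z, this]
  · rw [hsum]
    by_cases hvv : v = v₀
    · subst hvv
      have htot : ∑ w ∈ S, ∑ e : X, x e * (cnt w (inc e) : ZMod 2) = 0 := by
        rw [Finset.sum_comm]
        refine Finset.sum_eq_zero fun e _ => ?_
        rw [← Finset.mul_sum, ← Nat.cast_sum, sum_cnt (hS e e.2)]
        have : ((2 : ℕ) : ZMod 2) = 0 := by decide
        rw [this, mul_zero]
      rw [Finset.sum_eq_single_of_mem v hv₀ fun w _ hw => hv w hw] at htot
      exact htot
    · exact hv v hvv
  · funext e
    have := congrFun h0 e.1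
    simpa [z] using this
  · simp [z, he]

/-- Cycles are even. -/
lemma IsCycle.chi_mem {V α : Type u} {G : Graph V α} {F X : Finset α} (hX : X ⊆ F)
    (hC : G.IsCycle X) : chi X ∈ cyc G.inc F := by
  rw [chi_mem_cyc hX]
  intro v
  by_cases hv : v ∈ G.vertsOf X
  · rw [hC.2.2.2.1 v hv]; exact even_two
  · rw [deg_eq_zero hv]; exact Even.zero

/-- A nonempty even subset of a cycle is the whole cycle: it contains all edges of the cycle
at each of its vertices, and the cycle is connected. -/
lemma IsCycle.eq_of_subset {V α : Type u} {G : Graph V α} {F X Y : Finset α} (hX : X ⊆ F)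
    (hC : G.IsCycle X) (hYX : Y ⊆ X) (hY : Y.Nonempty) (hYc : chi Y ∈ cyc G.inc F) :
    Y = X := by
  classical
  rw [chi_mem_cyc (hYX.trans hX)] at hYc
  have hfull : ∀ v ∈ G.vertsOf Y, ∀ e ∈ X, v ∈ G.inc e → e ∈ Y := by
    intro v hv e he hve
    by_contra heY
    have h1 := deg_pos hv
    have h2 := hYc v
    have h3 := hC.2.2.2.1 v (by obtain ⟨f, hf, hvf⟩ := hv; exact ⟨f, hYX hf, hvf⟩)
    have h4 : G.deg Y v + cnt v (G.inc e) ≤ G.deg X v := by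
      rw [deg_eq_sum, deg_eq_sum, add_comm, 
        ← Finset.sum_insert (f := fun e => cnt v (G.inc e)) heY]
      exact Finset.sum_le_sum_of_subset (Finset.insert_subset he hYX)
    have h5 := cnt_pos hve
    obtain ⟨k, hk⟩ := h2
    omega
  obtain ⟨f, hf⟩ := hY
  have hu : (G.inc f).out.1 ∈ G.vertsOf (Y : Set α) := ⟨f, hf, Sym2.out_fst_mem _⟩
  have hreach : ∀ w, Relation.ReflTransGen (G.AdjOn X) (G.inc f).out.1 w → w ∈ G.vertsOf Y := by
    intro w hw
    induction hw with
    | refl => exact hu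
    | tail _ h ih =>
      obtain ⟨e, he, hinc⟩ := h
      exact ⟨e, hfull _ ih e he (by rw [hinc]; simp), by rw [hinc]; simp⟩
  refine Finset.Subset.antisymm hYX fun e he => ?_
  have hw : (G.inc e).out.1 ∈ G.vertsOf (X : Set α) := ⟨e, he, Sym2.out_fst_mem _⟩
  refine hfull _ (hreach _ (hC.2.2.2.2 _ ⟨f, hYX hf, Sym2.out_fst_mem _⟩ _ hw)) e he
    (Sym2.out_fst_mem _)

/-- Every nonzero vector of the cycle space has a cycle in its support. A vector of minimal
support `X` is such a cycle: `X` is connected since its components are even, and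
`exists_cyc_of_card` bounds `|X|` by the number of vertices of `X`, which forces all the
(positive, even) degrees to equal 2. -/
lemma exists_cycle {V α : Type u} {G : Graph V α} {F : Finset α} (hF : (F : Set α) = G.E)
    {z : α → ZMod 2} (hz : z ∈ cyc G.inc F) (hz0 : z ≠ 0) :
    ∃ X : Finset α, G.IsCycle X ∧ ∀ e ∈ X, z e ≠ 0 := by
  classical
  -- an even set of minimal size inside the support of `z`
  let P : Finset (Finset α) := F.powerset.filter
    (fun X => X.Nonempty ∧ chi X ∈ cyc G.inc F ∧ ∀ e ∈ X, z e ≠ 0)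
  have hP : P.Nonempty := by
    refine ⟨F.filter (fun e => z e ≠ 0), ?_⟩
    have hsupp : ∀ e, z e ≠ 0 ↔ e ∈ F.filter (fun e => z e ≠ 0) := by
      intro e
      simp only [Finset.mem_filter]
      exact ⟨fun h => ⟨by by_contra h'; exact h (hz.1 e h'), h⟩, fun h => h.2⟩
    simp only [P, Finset.mem_filter, Finset.mem_powerset]
    refine ⟨Finset.filter_subset _ _, ?_, ?_, fun e he => he.2⟩
    · obtain ⟨e, he⟩ := Function.ne_iff.1 hz0
      exact ⟨e, (hsupp e).1 he⟩
    · rw [← eq_chi hsupp]; exact hz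
  obtain ⟨X, hXP, hmin⟩ := Finset.exists_min_image P Finset.card hP
  simp only [P, Finset.mem_filter, Finset.mem_powerset] at hXP
  obtain ⟨hXF, hXne, hXc, hXz⟩ := hXP
  have hmin' : ∀ Y ⊆ X, Y.Nonempty → chi Y ∈ cyc G.inc F → Y = X := by
    intro Y hY hYne hYc
    refine Finset.eq_of_subset_of_card_le hY (hmin Y ?_)
    simp only [P, Finset.mem_filter, Finset.mem_powerset]
    exact ⟨hY.trans hXF, hYne, hYc, fun e he => hXz e (hY he)⟩
  have heven := (chi_mem_cyc hXF).1 hXc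
  refine ⟨X, ⟨hF ▸ Finset.coe_subset.2 hXF, X.finite_toSet, hXne, ?_, ?_⟩, hXz⟩
  · let S : Finset V := X.biUnion fun e => (G.inc e).toFinset
    have hS : ∀ v, v ∈ S ↔ v ∈ G.vertsOf X := by
      intro v
      simp only [S, Finset.mem_biUnion, Sym2.mem_toFinset, Graph.vertsOf, Finset.mem_coe]; rfl
    have hcard : X.card ≤ S.card := by
      by_contra hlt
      obtain ⟨f, hf⟩ := hXne
      by_cases hYne : (X.erase f).Nonempty
      · obtain ⟨y, hy, hy0, hyX⟩ := exists_cyc_of_card G.inc (F := F) (X := X.erase f)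
          ((Finset.erase_subset _ _).trans hXF) S
          (fun e he v hv => (hS v).2 ⟨e, Finset.mem_of_mem_erase he, hv⟩) hYne
          (by rw [Finset.card_erase_of_mem hf]; omega)
        have hsupp : ∀ e, y e ≠ 0 ↔ e ∈ X.filter (fun e => y e ≠ 0) := by
          intro e
          simp only [Finset.mem_filter]
          exact ⟨fun h => ⟨by
            by_contra h'; exact h (hyX e fun h'' => h' (Finset.mem_of_mem_erase h'')), h⟩,
            fun h => h.2⟩
        have hfy : f ∈ X.filter (fun e => y e ≠ 0) := by
          rw [hmin' _ (Finset.filter_subset _ _) ?_ ?_]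
          · exact hf
          · obtain ⟨e, he⟩ := Function.ne_iff.1 hy0
            exact ⟨e, (hsupp e).1 he⟩
          · rw [← eq_chi hsupp]; exact hy
        exact (hsupp f).2 hfy (hyX f (Finset.notMem_erase f X))
      · have h1 : X.card ≤ 1 := by
          have h2 := Finset.card_erase_of_mem hf
          rw [Finset.not_nonempty_iff_eq_empty.1 hYne] at h2
          simp at h2; omega
        have h2 : 1 ≤ S.card :=
          Finset.card_pos.2 ⟨_, (hS _).2 ⟨f, hf, Sym2.out_fst_mem (G.inc f)⟩⟩
        omega
    have hsum : ∑ v ∈ S, G.deg X v = 2 * X.card := by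
      simp_rw [deg_eq_sum]
      rw [Finset.sum_comm, Finset.sum_congr rfl fun e he =>
        sum_cnt fun v hv => (hS v).2 ⟨e, he, hv⟩]
      simp [mul_comm]
    have hge : ∀ v ∈ S, 2 ≤ G.deg X v := by
      intro v hv
      have h1 := deg_pos ((hS v).1 hv)
      obtain ⟨k, hk⟩ := heven v
      omega
    have heq : ∑ v ∈ S, 2 = ∑ v ∈ S, G.deg X v := by
      refine le_antisymm (Finset.sum_le_sum hge) ?_
      rw [hsum]; simp; omega
    intro v hv
    exact ((Finset.sum_eq_sum_iff_of_le hge).1 heq v ((hS v).2 hv)).symm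
  · intro u hu w hw
    let Y := X.filter (fun e => ∀ v ∈ G.inc e, Relation.ReflTransGen (G.AdjOn X) u v)
    have hstep : ∀ e ∈ X, ∀ v ∈ G.inc e, Relation.ReflTransGen (G.AdjOn X) u v → e ∈ Y := by
      intro e he v hv hr
      refine Finset.mem_filter.2 ⟨he, fun w hw => ?_⟩
      by_cases hvw : w = v
      · rw [hvw]; exact hr
      · exact hr.tail ⟨e, he, (Sym2.mem_and_mem_iff (Ne.symm hvw)).1 ⟨hv, hw⟩⟩
    have hYX : Y = X := by
      refine hmin' Y (Finset.filter_subset _ _) ?_ ?_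
      · obtain ⟨e, he, hue⟩ := hu
        exact ⟨e, hstep e he u hue .refl⟩
      · rw [chi_mem_cyc ((Finset.filter_subset _ _).trans hXF)]
        intro v
        by_cases hr : Relation.ReflTransGen (G.AdjOn X) u v
        · have : G.deg Y v = G.deg X v := by
            rw [deg_eq_sum, deg_eq_sum]
            refine Finset.sum_subset (Finset.filter_subset _ _) fun e he heY => ?_
            exact cnt_eq_zero fun hv => heY (hstep e he v hv hr)
          rw [this]; exact heven v
        · rw [deg_eq_zero]
          · exact Even.zero
          · rintro ⟨e, he, hv⟩
            exact hr ((Finset.mem_filter.1 he).2 v hv)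
    obtain ⟨e, he, hwe⟩ := hw
    have he' : e ∈ Y := hYX ▸ he
    exact (Finset.mem_filter.1 he').2 w hwe

/-! ### Binary representations of matroids -/

/-- `Z` is the cycle space of a binary representation of `M`: a subset of the ground set is
dependent exactly when it supports a nonzero vector of `Z`. -/
def Rep {α : Type u} (M : Matroid α) (Z : Submodule (ZMod 2) (α → ZMod 2)) : Prop :=
  ∀ X, M.Dep X ↔ X ⊆ M.E ∧ ∃ z ∈ Z, z ≠ 0 ∧ ∀ e ∉ X, z e = 0

lemma rep_of_graphic {V α : Type u} {G : Graph V α} {M : Matroid α} {F : Finset α}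
    (hF : (F : Set α) = G.E) (h : IsGraphicRep G M) : Rep M (cyc G.inc F) := by
  intro X
  rw [dep_iff_superset_isCircuit', and_comm]
  refine and_congr_right fun hXE => ⟨?_, ?_⟩
  · rintro ⟨C, hCX, hC⟩
    have hcy := (h.2 C).1 hC
    lift C to Finset α using hcy.2.1
    refine ⟨chi C, IsCycle.chi_mem (Finset.coe_subset.1 (hF ▸ hcy.1)) hcy, fun h0 => ?_,
      fun e he => chi_of_notMem fun h' => he (hCX h')⟩
    obtain ⟨e, he⟩ := hcy.2.2.1
    have := congrFun h0 e
    rw [chi_of_mem he] at this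
    exact one_ne_zero this
  · rintro ⟨z, hz, hz0, hzX⟩
    obtain ⟨C, hC, hCz⟩ := exists_cycle hF hz hz0
    exact ⟨C, fun e he => by_contra fun h' => hCz e he (hzX e h'), (h.2 C).2 hC⟩

lemma chi_ne_zero {α : Type u} {X : Finset α} (h : X.Nonempty) : chi X ≠ 0 := by
  obtain ⟨e, he⟩ := h
  intro h0
  have := congrFun h0 e
  rw [chi_of_mem he] at this
  exact one_ne_zero this

lemma graphic_of_rep {V α : Type u} {G : Graph V α} {M : Matroid α} {F : Finset α}
    (hF : (F : Set α) = G.E) (hE : M.E = G.E) (h : Rep M (cyc G.inc F)) :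
    IsGraphicRep G M := by
  have hdep : ∀ X : Finset α, G.IsCycle X → M.Dep X := by
    intro X hX
    refine (h X).2 ⟨hE ▸ hX.1, chi X, IsCycle.chi_mem (Finset.coe_subset.1 (hF ▸ hX.1)) hX,
      chi_ne_zero hX.2.2.1, fun e he => chi_of_notMem he⟩
  refine ⟨hE, fun C => ⟨fun hC => ?_, fun hC => ?_⟩⟩
  · obtain ⟨-, z, hz, hz0, hzC⟩ := (h C).1 hC.prop
    obtain ⟨X, hX, hXz⟩ := exists_cycle hF hz hz0
    have hXC : (X : Set α) ⊆ C := fun e he => by_contra fun h' => hXz e he (hzC e h')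
    rw [hC.eq_of_subset (hdep X hX) hXC] at hX
    exact hX
  · obtain ⟨X, rfl⟩ := hC.2.1.exists_finset_coe
    have hXF : X ⊆ F := Finset.coe_subset.1 (hF ▸ hC.1)
    refine ⟨hdep X hC, fun Y hY hYX => ?_⟩
    obtain ⟨-, z, hz, hz0, hzY⟩ := (h Y).1 hY
    obtain ⟨X', hX', hXz⟩ := exists_cycle hF hz hz0
    have hXY : (X' : Set α) ⊆ Y := fun e he => by_contra fun h' => hXz e he (hzY e h')
    have hXX : X' ⊆ X := Finset.coe_subset.1 (hXY.trans hYX)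
    have := IsCycle.eq_of_subset hXF hC hXX hX'.2.2.1
      (IsCycle.chi_mem (hXX.trans hXF) hX')
    rw [this] at hXY
    exact hXY

/-- The orthogonal complement of `Z` inside the space of vectors supported on `F`. -/
def orth {α : Type u} (F : Finset α) (Z : Submodule (ZMod 2) (α → ZMod 2)) :
    Submodule (ZMod 2) (α → ZMod 2) where
  carrier := {y | (∀ e ∉ F, y e = 0) ∧ ∀ z ∈ Z, ∑ e ∈ F, y e * z e = 0}
  add_mem' := by
    rintro a b ⟨ha, ha'⟩ ⟨hb, hb'⟩
    refine ⟨fun e he => by simp [ha e he, hb e he], fun v hv => ?_⟩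
    simp [add_mul, Finset.sum_add_distrib, ha' v hv, hb' v hv]
  zero_mem' := by simp
  smul_mem' := by
    rintro c a ⟨ha, ha'⟩
    refine ⟨fun e he => by simp [ha e he], fun v hv => ?_⟩
    simp [mul_assoc, ← Finset.mul_sum, ha' v hv]

lemma mem_orth {α : Type u} {F : Finset α} {Z : Submodule (ZMod 2) (α → ZMod 2)}
    {y : α → ZMod 2} : y ∈ orth F Z ↔
      (∀ e ∉ F, y e = 0) ∧ ∀ z ∈ Z, ∑ e ∈ F, y e * z e = 0 := Iff.rfl

/-- If no nonzero vector of `orth F Z` is supported on `D`, then `Z` projects onto all vectors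
on `D`; in particular each unit vector is a projection. -/
lemma exists_single {α : Type u} {F : Finset α} {Z : Submodule (ZMod 2) (α → ZMod 2)}
    {D : Finset α} (hDF : D ⊆ F) (hD : ∀ y ∈ orth F Z, (∀ e ∉ D, y e = 0) → y = 0)
    {f : α} (hf : f ∈ D) : ∃ w ∈ Z, w f = 1 ∧ ∀ e ∈ D, e ≠ f → w e = 0 := by
  classical
  let R : (α → ZMod 2) →ₗ[ZMod 2] (D → ZMod 2) := LinearMap.funLeft (ZMod 2) (ZMod 2) (fun d => d.1)
  have htop : Z.map R = ⊤ := by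
    by_contra hne
    obtain ⟨φ, hφ0, hφ⟩ := Submodule.exists_le_ker_of_lt_top _ (lt_top_iff_ne_top.2 hne)
    let y : α → ZMod 2 := fun e => if h : e ∈ D then φ (Pi.single ⟨e, h⟩ 1) else 0
    have hyD : ∀ e ∉ D, y e = 0 := fun e he => by simp [y, he]
    have hy : y ∈ orth F Z := by
      refine mem_orth.2 ⟨fun e he => hyD e fun h => he (hDF h), fun z hz => ?_⟩
      have h1 : φ (R z) = 0 := hφ (Submodule.mem_map_of_mem hz)
      rw [← Finset.sum_subset hDF (fun e _ he => by simp [hyD e he]), ← h1,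
        LinearMap.pi_apply_eq_sum_univ φ (R z), ← Finset.sum_coe_sort D]
      refine Finset.sum_congr rfl fun e _ => ?_
      have h2 : (fun j => if e = j then (1 : ZMod 2) else 0) = Pi.single e 1 := by
        funext j; simp [Pi.single_apply, eq_comm]
      rw [h2]
      simp [y, R, LinearMap.funLeft_apply, mul_comm]
    apply hφ0
    have hy0 := hD y hy hyD
    refine LinearMap.pi_ext' fun i => LinearMap.ext_ring ?_
    have := congrFun hy0 i.1
    simpa [y] using this
  have : (Pi.single ⟨f, hf⟩ 1 : D → ZMod 2) ∈ Z.map R := htop ▸ Submodule.mem_top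
  obtain ⟨w, hw, hwR⟩ := this
  refine ⟨w, hw, ?_, fun e he hef => ?_⟩
  · have := congrFun hwR ⟨f, hf⟩
    simpa [R, LinearMap.funLeft_apply] using this
  · have := congrFun hwR ⟨e, he⟩
    simpa [R, LinearMap.funLeft_apply, Pi.single_apply, hef] using this

/-- Duality of binary matroids: the dual matroid is represented by the orthogonal
complement. -/
lemma Rep.dual {α : Type u} {M : Matroid α} {F : Finset α} (hF : (F : Set α) = M.E)
    {Z : Submodule (ZMod 2) (α → ZMod 2)} (hZ : ∀ z ∈ Z, ∀ e ∉ F, z e = 0)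
    (h : Rep M Z) : Rep M✶ (orth F Z) := by
  classical
  intro D
  constructor
  · intro hD
    have hDE : D ⊆ M.E := hD.subset_ground
    refine ⟨hDE, ?_⟩
    by_contra hcon
    push Not at hcon
    refine hD.not_indep ((dual_indep_iff_exists hDE).2 ?_)
    obtain ⟨B, hB⟩ := M.exists_isBasis (M.E \ D) sdiff_subset
    refine ⟨B, ?_, ?_⟩
    swap
    · exact disjoint_of_subset_right hB.subset disjoint_sdiff_right
    have hfin : D.Finite := (F.finite_toSet.subset (hF ▸ hDE))
    obtain ⟨D', rfl⟩ := hfin.exists_finset_coe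
    have hD'F : D' ⊆ F := Finset.coe_subset.1 (hF ▸ hDE)
    -- every element outside `B` completes `B` to a dependent set
    refine hB.indep.isBase_of_forall_insert fun f hf hi => ?_
    by_cases hfD : f ∈ D'
    · obtain ⟨w, hw, hwf, hwD⟩ := exists_single (Z := Z) hD'F (fun y hy hyD => by
        by_contra hy0
        obtain ⟨e, he, hye⟩ := hcon y hy hy0
        exact hye (hyD e he)) hfD
      have hz : ∀ g, ∃ z ∈ Z, g ∈ M.E → g ∉ D' → g ∉ B → z g = 1 ∧ ∀ e ∉ insert g B, z e = 0 := by
        intro g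
        by_cases hg : g ∈ M.E ∧ g ∉ D' ∧ g ∉ B
        · obtain ⟨-, z, hz, hz0, hzB⟩ := (h _).1 (hB.insert_dep ⟨⟨hg.1, hg.2.1⟩, hg.2.2⟩)
          refine ⟨z, hz, fun _ _ _ => ⟨?_, hzB⟩⟩
          have h01 : ∀ a : ZMod 2, a ≠ 0 → a = 1 := by decide
          refine h01 _ fun hg0 => ?_
          refine hB.indep.not_dep ((h B).2 ⟨hB.indep.subset_ground, z, hz, hz0, fun e he => ?_⟩)
          by_cases heg : e = g
          · rw [heg]; exact hg0
          · exact hzB e (by simp [heg, he])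
        · exact ⟨0, Z.zero_mem, fun h1 h2 h3 => absurd ⟨h1, h2, h3⟩ hg⟩
      choose z hzZ hz using hz
      let T : Finset α := F.filter fun g => g ∉ D' ∧ g ∉ B
      -- clear the entries of `w` off `B` by adding fundamental circuits of `B`
      let w' : α → ZMod 2 := w + ∑ g ∈ T, w g • z g
      have hoff : ∀ g ∈ T, ∀ e ∉ B, e ≠ g → z g e = 0 := by
        intro g hg e heB heg
        obtain ⟨h1, h2, h3⟩ := Finset.mem_filter.1 hg
        exact (hz g (hF ▸ h1) h2 h3).2 e (by simp [heg, heB])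
      have hBD : ∀ e ∈ D', e ∉ B := fun e he heB => (hB.subset heB).2 he
      have hfT : ∀ g ∈ T, ∀ e ∈ D', e ≠ g := by
        intro g hg e he heg
        exact (Finset.mem_filter.1 hg).2.1 (heg ▸ he)
      have hwD' : ∀ e ∈ D', w' e = w e := by
        intro e he
        simp only [w', Pi.add_apply, Finset.sum_apply, Pi.smul_apply, smul_eq_mul]
        rw [Finset.sum_eq_zero fun g hg => by rw [hoff g hg e (hBD e he) (hfT g hg e he), mul_zero],
          add_zero]
      have hw' : w' ∈ Z := Z.add_mem hw (Z.sum_mem fun g _ => Z.smul_mem _ (hzZ g))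
      refine ((h _).2 ⟨insert_subset hf.1 hB.indep.subset_ground, w', hw', fun h0 => ?_,
        fun e he => ?_⟩).not_indep hi
      · have := congrFun h0 f
        rw [hwD' f hfD, hwf] at this
        exact one_ne_zero this
      · simp only [mem_insert_iff, not_or] at he
        by_cases heF : e ∈ F
        swap
        · exact hZ _ hw' e heF
        by_cases heD : e ∈ D'
        · rw [hwD' e heD]; exact hwD e heD he.1
        · have heT : e ∈ T := Finset.mem_filter.2 ⟨heF, heD, he.2⟩
          simp only [w', Pi.add_apply, Finset.sum_apply, Pi.smul_apply, smul_eq_mul]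
          rw [Finset.sum_eq_single_of_mem e heT fun g hg hge => by
            rw [hoff g hg e he.2 hge.symm, mul_zero], (hz e (hF ▸ heF) heD he.2).1, mul_one]
          exact CharTwo.add_self_eq_zero _
    · exact (hB.insert_dep ⟨⟨hf.1, hfD⟩, hf.2⟩).not_indep hi
  · rintro ⟨hDE, y, hy, hy0, hyD⟩
    refine dual_dep_iff_forall.2 ⟨fun B hB => ?_, hDE⟩
    by_contra hemp
    rw [Set.not_nonempty_iff_eq_empty] at hemp
    obtain ⟨e, he⟩ := Function.ne_iff.1 hy0
    have heD : e ∈ D := by_contra fun h' => he (hyD e h')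
    have heB : e ∉ B := fun h' => (hemp ▸ (⟨heD, h'⟩ : e ∈ D ∩ B) : e ∈ (∅ : Set α))
    obtain ⟨-, z, hz, hz0, hzB⟩ := (h _).1 (hB.insert_dep ⟨hDE heD, heB⟩)
    have hze : z e ≠ 0 := by
      intro hze
      refine hB.indep.not_dep ((h B).2 ⟨hB.subset_ground, z, hz, hz0, fun e' he' => ?_⟩)
      by_cases heg : e' = e
      · rw [heg]; exact hze
      · exact hzB e' (by simp [heg, he'])
    have hs := hy.2 z hz
    rw [Finset.sum_eq_single e] at hs
    · exact mul_ne_zero he hze hs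
    · intro b _ hbe
      by_cases hbD : b ∈ D
      · rw [hzB b, mul_zero]
        rintro (h' | h')
        · exact hbe h'
        · exact (hemp ▸ (⟨hbD, h'⟩ : b ∈ D ∩ B) : b ∈ (∅ : Set α))
      · rw [hyD b hbD, zero_mul]
    · intro hn
      exact absurd (Finset.mem_coe.1 (hF ▸ hDE heD)) hn


/-! ### Minors of graphic matroids -/

lemma IsGraphic.del {α : Type u} {M : Matroid α} (h : IsGraphic M) (D : Set α) :
    IsGraphic (M ＼ D) := by
  obtain ⟨V, G, hE, hC⟩ := h
  refine ⟨V, G.delete D, by simp [Graph.delete, hE], fun C => ?_⟩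
  have h1 : Circuit (M ＼ D) C ↔ M.IsCircuit C ∧ Disjoint C D := delete_isCircuit_iff
  have h2 : M.IsCircuit C ↔ G.IsCycle C := hC C
  rw [h1, h2]
  constructor
  · rintro ⟨⟨hCE, h⟩, hd⟩
    exact ⟨subset_sdiff.2 ⟨hCE, hd⟩, h⟩
  · rintro ⟨hCE, h⟩
    exact ⟨⟨hCE.trans sdiff_subset, h⟩, (subset_sdiff.1 hCE).2⟩

/-- Contracting a nonloop edge `e = uv` of a graph identifies `v` with `u`. A vector is in the
new cycle space exactly when some choice of its entry at `e` puts it in the old one. -/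
lemma IsGraphic.contract_singleton {α : Type u} {M : Matroid α} (h : IsGraphic M)
    (hfin : M.E.Finite) (e : α) : IsGraphic (M ／ {e}) := by
  classical
  by_cases heE : e ∈ M.E
  swap
  · rwa [contractElem_eq_self heE]
  by_cases hloop : M.IsLoop e
  · rw [contract_eq_delete_of_subset_loops (singleton_subset_iff.2 hloop)]
    exact h.del _
  have hnl : M.IsNonloop e := (not_isLoop_iff heE).1 hloop
  obtain ⟨V, G, hG⟩ := h
  obtain ⟨F, hFM⟩ := hfin.exists_finset_coe
  have hF : (F : Set α) = G.E := hFM.trans hG.1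
  have hrep := rep_of_graphic hF hG
  have heF : e ∈ F := Finset.mem_coe.1 (hFM ▸ heE)
  have hsingle : ∀ z ∈ cyc G.inc F, (∀ f ≠ e, z f = 0) → z = 0 := by
    intro z hz hze
    by_contra hz0
    exact hnl.indep.not_dep ((hrep {e}).2 ⟨by simpa using heE, z, hz, hz0, fun f hf => hze f hf⟩)
  obtain ⟨u, v, huv⟩ : ∃ u v, G.inc e = s(u, v) :=
    ⟨_, _, (Quot.out_eq (G.inc e)).symm⟩
  have hne : u ≠ v := by
    rintro rfl
    have hmem : chi {e} ∈ cyc G.inc F := by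
      rw [chi_mem_cyc (by simpa using heF)]
      intro w
      rw [deg_eq_sum, Finset.sum_singleton, huv, cnt_mk]
      exact ⟨_, rfl⟩
    exact chi_ne_zero (Finset.singleton_nonempty e)
      (hsingle _ hmem fun f hf => chi_of_notMem (by simpa using hf))
  let φ : V → V := fun x => if x = v then u else x
  have hφu : ∀ p : Sym2 V, cnt u (p.map φ) = cnt u p + cnt v p := by
    intro p
    induction p with | _ a b => ?_
    rw [Sym2.map_mk, cnt_mk, cnt_mk, cnt_mk]
    simp only [φ]
    grind
  have hφv : ∀ p : Sym2 V, cnt v (p.map φ) = 0 := by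
    intro p
    induction p with | _ a b => ?_
    rw [Sym2.map_mk, cnt_mk]
    simp only [φ]
    grind
  have hφw : ∀ w, w ≠ u → w ≠ v → ∀ p : Sym2 V, cnt w (p.map φ) = cnt w p := by
    intro w hu hv p
    induction p with | _ a b => ?_
    rw [Sym2.map_mk, cnt_mk, cnt_mk]
    simp only [φ]
    grind
  let H : Graph V α := ⟨G.E \ {e}, fun f => (G.inc f).map φ⟩
  have hFH : ((F.erase e : Finset α) : Set α) = H.E := by simp [H, hF]
  refine ⟨V, H, graphic_of_rep hFH (by simp [H, hG.1]) fun X => ?_⟩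
  have hsplit : ∀ (z : α → ZMod 2) (w : V), ∑ f ∈ F, z f * (cnt w (G.inc f) : ZMod 2) =
      ∑ f ∈ F.erase e, z f * (cnt w (G.inc f) : ZMod 2) + z e * (cnt w s(u, v) : ZMod 2) := by
    intro z w
    rw [← Finset.sum_erase_add _ _ heF, huv]
  have hcu : cnt u s(u, v) = 1 := by simp [cnt_mk, hne]
  have hcv : cnt v s(u, v) = 1 := by simp [cnt_mk, hne.symm]
  have hcw : ∀ w, w ≠ u → w ≠ v → cnt w s(u, v) = 0 := by
    intro w h1 h2; simp [cnt_mk, h1, h2]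
  have hrow : ∀ z : α → ZMod 2, ∑ f ∈ F.erase e, z f * (cnt u (H.inc f) : ZMod 2) =
      ∑ f ∈ F.erase e, z f * (cnt u (G.inc f) : ZMod 2) +
        ∑ f ∈ F.erase e, z f * (cnt v (G.inc f) : ZMod 2) := by
    intro z
    rw [← Finset.sum_add_distrib]
    refine Finset.sum_congr rfl fun f _ => ?_
    simp only [H, hφu]
    push_cast
    ring
  rw [hnl.indep.contract_dep_iff, hrep, contract_ground, subset_sdiff, union_subset_iff]
  constructor
  · rintro ⟨hd, ⟨hXE, -⟩, z, hz, hz0, hzX⟩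
    refine ⟨⟨hXE, hd⟩, Function.update z e 0, mem_cyc.2 ⟨fun f hf => ?_, fun w => ?_⟩,
      fun h0 => hz0 ?_, fun f hf => ?_⟩
    · by_cases hfe : f = e
      · simp [hfe]
      · simp only [Function.update_of_ne hfe]
        exact hz.1 f fun h' => hf (Finset.mem_erase.2 ⟨hfe, h'⟩)
    · have hcongr : ∑ f ∈ F.erase e, Function.update z e 0 f * (cnt w (H.inc f) : ZMod 2) =
          ∑ f ∈ F.erase e, z f * (cnt w (H.inc f) : ZMod 2) :=
        Finset.sum_congr rfl fun f hf => by
          rw [Function.update_of_ne (Finset.ne_of_mem_erase hf)]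
      rw [hcongr]
      by_cases hwv : w = v
      · subst hwv
        exact Finset.sum_eq_zero fun f _ => by simp [H, hφv]
      by_cases hwu : w = u
      · subst hwu
        have h1 := hz.2 w
        have h2 := hz.2 v
        rw [hsplit] at h1 h2
        rw [hcu] at h1
        rw [hcv] at h2
        rw [hrow, eq_neg_of_add_eq_zero_left h1, eq_neg_of_add_eq_zero_left h2]
        exact CharTwo.add_self_eq_zero _
      · have h1 := hz.2 w
        rw [hsplit, hcw w hwu hwv] at h1
        simpa [H, hφw w hwu hwv] using h1
    · refine hsingle z hz fun f hf => ?_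
      have := congrFun h0 f
      rwa [Function.update_of_ne hf] at this
    · by_cases hfe : f = e
      · simp [hfe]
      · rw [Function.update_of_ne hfe]
        exact hzX f (by simp [hf, hfe])
  · rintro ⟨⟨hXE, hd⟩, z, hz, hz0, hzX⟩
    have hze : z e = 0 := hz.1 e (Finset.notMem_erase e F)
    refine ⟨hd, ⟨hXE, by simpa using heE⟩, Function.update z e
      (∑ f ∈ F.erase e, z f * (cnt u (G.inc f) : ZMod 2)),
      mem_cyc.2 ⟨fun f hf => ?_, fun w => ?_⟩, fun h0 => hz0 ?_, fun f hf => ?_⟩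
    · have hfe : f ≠ e := fun h' => hf (h' ▸ heF)
      rw [Function.update_of_ne hfe]
      exact hz.1 f fun h' => hf (Finset.mem_of_mem_erase h')
    · have hcongr : ∀ c : ZMod 2,
          ∑ f ∈ F.erase e, Function.update z e c f * (cnt w (G.inc f) : ZMod 2) =
          ∑ f ∈ F.erase e, z f * (cnt w (G.inc f) : ZMod 2) := fun c =>
        Finset.sum_congr rfl fun f hf => by
          rw [Function.update_of_ne (Finset.ne_of_mem_erase hf)]
      rw [hsplit, hcongr, Function.update_self]
      by_cases hwv : w = v
      · subst hwv
        have h1 := hz.2 u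
        rw [hrow] at h1
        rw [hcv, Nat.cast_one, mul_one, add_comm]
        exact h1
      by_cases hwu : w = u
      · subst hwu
        rw [hcu, Nat.cast_one, mul_one]
        exact CharTwo.add_self_eq_zero _
      · have h1 := hz.2 w
        rw [hcw w hwu hwv]
        simpa [H, hφw w hwu hwv] using h1
    · funext f
      by_cases hfe : f = e
      · rw [hfe, hze]; rfl
      · have := congrFun h0 f
        rwa [Function.update_of_ne hfe] at this
    · simp only [mem_union, mem_singleton_iff, not_or] at hf
      rw [Function.update_of_ne hf.2]
      exact hzX f hf.1

lemma IsGraphic.contract {α : Type u} {M : Matroid α} (h : IsGraphic M)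
    (hfin : M.E.Finite) (C : Set α) : IsGraphic (M ／ C) := by
  have key : ∀ K : Set α, K.Finite → IsGraphic (M ／ K) := by
    intro K hK
    induction K, hK using Set.Finite.induction_on with
    | empty => simpa using h
    | @insert a s _ _ ih =>
      have : M ／ insert a s = M ／ s ／ {a} := by
        rw [contract_contract, union_singleton]
      rw [this]
      exact ih.contract_singleton (hfin.subset (contract_ground_subset_ground _ _)) a
  have : M ／ C = M ／ (C ∩ M.E) := by
    rw [contract_eq_contract_iff]; simp [inter_assoc]
  rw [this]
  exact key _ (hfin.subset inter_subset_right)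

/-! ### Coordinates -/

/-- The boundary at the vertex `j` of the vector `x`, in the graph on `Fin n` whose `i`-th edge
joins `p i` and `q i`. -/
def bd {m n : ℕ} (p q : Fin m → Fin n) (x : Fin m → ZMod 2) (j : Fin n) : ZMod 2 :=
  ∑ i, x i * ((if j = p i then 1 else 0) + (if j = q i then 1 else 0))

lemma sum_extend {α : Type u} {m : ℕ} {g : Fin m → α} (hg : Function.Injective g)
    (I : Finset (Fin m)) (z h : α → ZMod 2) (hz : ∀ i ∉ I, z (g i) = 0) :
    ∑ e ∈ I.map ⟨g, hg⟩, z e * h e = ∑ i, z (g i) * h (g i) := by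
  rw [Finset.sum_map]
  exact Finset.sum_subset (Finset.subset_univ I) fun i _ hi => by simp [hz i hi]

/-- Membership in the cycle space of a graph with enumerated vertices and edges. -/
lemma mem_cyc_iff_bd {V α : Type u} {m n : ℕ} {g : Fin m → α} (hg : Function.Injective g)
    {v : Fin n → V} (hv : Function.Injective v) {p q : Fin m → Fin n} {inc : α → Sym2 V}
    {I : Finset (Fin m)} (hinc : ∀ i ∈ I, inc (g i) = s(v (p i), v (q i))) {z : α → ZMod 2}
    (hz : ∀ e ∉ I.map ⟨g, hg⟩, z e = 0) :
    z ∈ cyc inc (I.map ⟨g, hg⟩) ↔ ∀ j, bd p q (fun i => z (g i)) j = 0 := by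
  classical
  have hzI : ∀ i ∉ I, z (g i) = 0 := fun i hi => hz _ fun h => hi (by simpa [hg.eq_iff] using h)
  have hterm : ∀ w i, z (g i) * (cnt w (inc (g i)) : ZMod 2) =
      z (g i) * ((if w = v (p i) then 1 else 0) + (if w = v (q i) then 1 else 0)) := by
    intro w i
    by_cases hi : i ∈ I
    · rw [hinc i hi, cnt_mk]; push_cast; rfl
    · simp [hzI i hi]
  rw [mem_cyc, and_iff_right hz]
  constructor
  · intro h j
    have := h (v j)
    rw [sum_extend hg I z (fun e => (cnt (v j) (inc e) : ZMod 2)) hzI] at this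
    simpa only [hterm, hv.eq_iff, bd] using this
  · intro h w
    rw [sum_extend hg I z (fun e => (cnt w (inc e) : ZMod 2)) hzI]
    simp only [hterm]
    by_cases hw : ∃ j, v j = w
    · obtain ⟨j, rfl⟩ := hw
      simpa only [hv.eq_iff, bd] using h j
    · push Not at hw
      exact Finset.sum_eq_zero fun i _ => by
        rw [if_neg (hw _).symm, if_neg (hw _).symm]; simp

lemma extend_notMem {α : Type u} {m : ℕ} {g : Fin m → α} (hg : Function.Injective g)
    {I : Finset (Fin m)} {x : Fin m → ZMod 2} (hx : ∀ i ∉ I, x i = 0) {X : Set α}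
    (hX : ∀ i, g i ∉ X → x i = 0) :
    (∀ e ∉ I.map ⟨g, hg⟩, Function.extend g x 0 e = 0) ∧
      ∀ e ∉ X, Function.extend g x 0 e = 0 := by
  have key : ∀ e, (∀ i, g i = e → x i = 0) → Function.extend g x 0 e = 0 := by
    intro e he
    by_cases h : ∃ i, g i = e
    · obtain ⟨i, rfl⟩ := h
      rw [hg.extend_apply]; exact he i rfl
    · rw [Function.extend_apply' _ _ _ h]; rfl
  refine ⟨fun e he => key e ?_, fun e he => key e ?_⟩
  · rintro i rfl
    exact hx i fun h => he (by simpa [hg.eq_iff] using h)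
  · rintro i rfl
    exact hX i he

lemma comp_ne_zero {α : Type u} {m : ℕ} {g : Fin m → α} (hg : Function.Injective g)
    {I : Finset (Fin m)} {z : α → ZMod 2} (hz0 : z ≠ 0)
    (hz : ∀ e ∉ I.map ⟨g, hg⟩, z e = 0) : (fun i => z (g i)) ≠ 0 := by
  intro h0
  refine hz0 (funext fun e => ?_)
  by_cases he : e ∈ I.map ⟨g, hg⟩
  · obtain ⟨i, -, rfl⟩ := Finset.mem_map.1 he
    exact congrFun h0 i
  · exact hz e he

lemma extend_ne_zero {α : Type u} {m : ℕ} {g : Fin m → α} (hg : Function.Injective g)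
    {x : Fin m → ZMod 2} (hx : x ≠ 0) : Function.extend g x 0 ≠ 0 := by
  intro h0
  refine hx (funext fun i => ?_)
  have := congrFun h0 (g i)
  rwa [hg.extend_apply] at this

/-- A matroid is graphic if its dependent sets are described by the boundary equations of an
enumerated graph. -/
lemma isGraphic_of_bd {α : Type u} {m n : ℕ} {M : Matroid α} {g : Fin m → α}
    (hg : Function.Injective g) (p q : Fin m → Fin n) (I : Finset (Fin m))
    (hE : M.E = g '' I)
    (hM : ∀ X ⊆ M.E, M.Dep X ↔ ∃ x : Fin m → ZMod 2, (∀ i ∉ I, x i = 0) ∧ x ≠ 0 ∧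
      (∀ j, bd p q x j = 0) ∧ ∀ i, g i ∉ X → x i = 0) : IsGraphic M := by
  classical
  rcases isEmpty_or_nonempty (Fin m) with hm | hm
  · refine ⟨PUnit, ⟨M.E, fun _ => s(PUnit.unit, PUnit.unit)⟩,
      graphic_of_rep (F := ∅) (by simp [hE, Finset.eq_empty_of_isEmpty I]) rfl fun X => ⟨fun h => ?_, ?_⟩⟩
    · obtain ⟨x, -, hx0, -⟩ := (hM X h.subset_ground).1 h
      exact absurd (Subsingleton.elim x 0) hx0
    · rintro ⟨-, z, hz, hz0, -⟩
      exact absurd (funext fun e => hz.1 e (Finset.notMem_empty e)) hz0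
  let v : Fin n → ULift.{u} (Fin n) := ULift.up
  have hv : Function.Injective v := ULift.up_injective
  let inc : α → Sym2 (ULift.{u} (Fin n)) := fun e =>
    s(v (p (Function.invFun g e)), v (q (Function.invFun g e)))
  have hinc : ∀ i ∈ I, inc (g i) = s(v (p i), v (q i)) := by
    intro i _
    simp [inc, Function.leftInverse_invFun hg i]
  refine ⟨_, ⟨M.E, inc⟩, graphic_of_rep (F := I.map ⟨g, hg⟩) (by simp [hE]) rfl fun X => ?_⟩
  constructor
  · intro h
    refine ⟨h.subset_ground, ?_⟩
    obtain ⟨x, hxI, hx0, hbd, hX⟩ := (hM X h.subset_ground).1 h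
    obtain ⟨h1, h2⟩ := extend_notMem hg hxI hX
    refine ⟨_, (mem_cyc_iff_bd hg hv hinc h1).2 ?_, extend_ne_zero hg hx0, h2⟩
    simpa [hg.extend_apply] using hbd
  · rintro ⟨hXE, z, hz, hz0, hzX⟩
    refine (hM X hXE).2 ⟨fun i => z (g i), fun i hi => hz.1 _ ?_, comp_ne_zero hg hz0 hz.1,
      (mem_cyc_iff_bd hg hv hinc hz.1).1 hz, fun i hi => hzX _ hi⟩
    simpa [hg.eq_iff] using hi

/-! ### The complete graph on five vertices -/

/-- First ends of the edges of `K₅`, listed as 01, 02, 03, 04, 12, 13, 14, 23, 24, 34. -/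
def kp : Fin 10 → Fin 5 := ![0, 0, 0, 0, 1, 1, 1, 2, 2, 3]

/-- Second ends of the edges of `K₅`, in the same order as `kp`. -/
def kq : Fin 10 → Fin 5 := ![1, 2, 3, 4, 2, 3, 4, 3, 4, 4]

/-- Edge cuts of `K₅` in coordinates: the vectors orthogonal to the six triangles through the
vertex 0. -/
def Cut (x : Fin 10 → ZMod 2) : Prop :=
  x 4 = x 0 + x 1 ∧ x 5 = x 0 + x 2 ∧ x 6 = x 0 + x 3 ∧
    x 7 = x 1 + x 2 ∧ x 8 = x 1 + x 3 ∧ x 9 = x 2 + x 3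

lemma sum_fin_ten (f : Fin 10 → ZMod 2) :
    ∑ i, f i = f 0 + f 1 + f 2 + f 3 + f 4 + f 5 + f 6 + f 7 + f 8 + f 9 := by
  simp only [Fin.sum_univ_castSucc, Fin.sum_univ_zero, zero_add]
  rfl

lemma cut_iff (x : Fin 10 → ZMod 2) :
    Cut x ↔ ∀ z, (∀ j, bd kp kq z j = 0) → ∑ i, x i * z i = 0 := by
  constructor
  · rintro ⟨h4, h5, h6, h7, h8, h9⟩ z hz
    have h1 := hz 1
    have h2 := hz 2
    have h3 := hz 3
    have h0 := hz 4
    simp [bd, kp, kq, sum_fin_ten] at h0 h1 h2 h3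
    rw [sum_fin_ten, h4, h5, h6, h7, h8, h9]
    linear_combination x 0 * h1 + x 1 * h2 + x 2 * h3 + x 3 * h0
  · intro h
    have t4 := h ![1, 1, 0, 0, 1, 0, 0, 0, 0, 0] (by decide)
    have t5 := h ![1, 0, 1, 0, 0, 1, 0, 0, 0, 0] (by decide)
    have t6 := h ![1, 0, 0, 1, 0, 0, 1, 0, 0, 0] (by decide)
    have t7 := h ![0, 1, 1, 0, 0, 0, 0, 1, 0, 0] (by decide)
    have t8 := h ![0, 1, 0, 1, 0, 0, 0, 0, 1, 0] (by decide)
    have t9 := h ![0, 0, 1, 1, 0, 0, 0, 0, 0, 1] (by decide)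
    simp [sum_fin_ten] at t4 t5 t6 t7 t8 t9
    have key : ∀ a b c : ZMod 2, a + b + c = 0 → c = a + b := by decide
    exact ⟨key _ _ _ t4, key _ _ _ t5, key _ _ _ t6, key _ _ _ t7, key _ _ _ t8, key _ _ _ t9⟩

/-- A copy of `K₅` can be enumerated with a prescribed edge in first place. -/
lemma IsK5.exists_enum {V α : Type u} {G : Graph V α} (h : IsK5 G) {e : α} (he : e ∈ G.E) :
    ∃ (v : Fin 5 → V) (g : Fin 10 → α), Function.Injective v ∧ Function.Injective g ∧
      G.E = range g ∧ g 0 = e ∧ ∀ i, G.inc (g i) = s(v (kp i), v (kq i)) := by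
  obtain ⟨v, hv, ed, hed, hE, hinc⟩ := h
  rw [hE] at he
  obtain ⟨⟨t, ht⟩, rfl⟩ := he
  induction t with | _ a b => ?_
  have hab : a ≠ b := by simpa using ht
  obtain ⟨σ, h0, h1⟩ : ∃ σ : Equiv.Perm (Fin 5), σ 0 = a ∧ σ 1 = b := by
    refine ⟨Equiv.swap 0 a * Equiv.swap 1 (Equiv.swap 0 a b), ?_, ?_⟩
    · revert a b; decide
    · revert a b; decide
  have hne : ∀ i, kp i ≠ kq i := by decide
  have hinj : ∀ i j, s(kp i, kq i) = s(kp j, kq j) → i = j := by decide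
  have hsurj : ∀ a b : Fin 5, a ≠ b → ∃ i, s(kp i, kq i) = s(a, b) := by decide
  refine ⟨v ∘ σ, fun i => ed ⟨s(σ (kp i), σ (kq i)), by simpa using hne i⟩,
    hv.comp σ.injective, fun i j hij => ?_, ?_, ?_, fun i => by simp [hinc]⟩
  · have h2 : Sym2.map σ s(kp i, kq i) = Sym2.map σ s(kp j, kq j) :=
      congrArg Subtype.val (hed hij)
    exact hinj i j (Sym2.map.injective σ.injective h2)
  · rw [hE]
    refine Subset.antisymm ?_ (range_subset_iff.2 fun i => ⟨_, rfl⟩)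
    rintro _ ⟨⟨t, ht⟩, rfl⟩
    induction t with | _ c d => ?_
    obtain ⟨i, hi⟩ := hsurj (σ.symm c) (σ.symm d) (by simpa using ht)
    refine ⟨i, congrArg ed (Subtype.ext ?_)⟩
    have := congrArg (Sym2.map σ) hi
    simpa using this
  · exact congrArg ed (Subtype.ext (by simp [kp, kq, h0, h1]))

/-- `N` is `M*(K₅)` in coordinates: the elements are enumerated by `g`, and a set is dependent
if and only if it contains the support of a nonzero edge cut of `K₅`. -/
def CutRep {α : Type u} (N : Matroid α) (g : Fin 10 → α) : Prop :=
  Function.Injective g ∧ N.E = range g ∧ ∀ X, N.Dep X ↔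
    X ⊆ range g ∧ ∃ x : Fin 10 → ZMod 2, Cut x ∧ x ≠ 0 ∧ ∀ i, g i ∉ X → x i = 0

lemma coe_univ_map {α : Type u} {g : Fin 10 → α} (hg : Function.Injective g) :
    ((Finset.univ.map ⟨g, hg⟩ : Finset α) : Set α) = range g := by simp

lemma cutRep_of_enum {V α : Type u} {N : Matroid α} {G : Graph V α} (h : IsGraphicRep G N✶)
    {v : Fin 5 → V} {g : Fin 10 → α} (hv : Function.Injective v) (hg : Function.Injective g)
    (hE : G.E = range g) (hinc : ∀ i, G.inc (g i) = s(v (kp i), v (kq i))) : CutRep N g := by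
  have hF := coe_univ_map hg
  have hNE : N.E = range g := h.1.trans hE
  have hrep := (rep_of_graphic (hF.trans hE.symm) h).dual (M := N✶) (hF.trans hNE.symm)
    (fun z hz => (mem_cyc.1 hz).1)
  rw [dual_dual] at hrep
  refine ⟨hg, hNE, fun X => (hrep X).trans ?_⟩
  rw [hNE]
  refine and_congr_right fun hX => ⟨?_, ?_⟩
  · rintro ⟨y, hy, hy0, hyX⟩
    refine ⟨fun i => y (g i), (cut_iff _).2 fun x hx => ?_, comp_ne_zero hg hy0 hy.1,
      fun i hi => hyX _ hi⟩
    obtain ⟨h1, -⟩ := extend_notMem hg (I := Finset.univ) (x := x) (X := univ) (by simp) (by simp)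
    have := hy.2 (Function.extend g x 0)
      ((mem_cyc_iff_bd hg hv (fun i _ => hinc i) h1).2 (by simpa [hg.extend_apply] using hx))
    rw [sum_extend hg _ _ _ (by simp)] at this
    simpa [hg.extend_apply] using this
  · rintro ⟨x, hx, hx0, hxX⟩
    obtain ⟨h1, h2⟩ := extend_notMem hg (I := Finset.univ) (x := x) (by simp) hxX
    refine ⟨_, ⟨h1, fun z hz => ?_⟩, extend_ne_zero hg hx0, h2⟩
    rw [sum_extend hg _ _ _ (by simp)]
    simpa [hg.extend_apply] using (cut_iff x).1 hx _
      ((mem_cyc_iff_bd hg hv (fun i _ => hinc i) hz.1).1 hz)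

/-- `K₅` has no loops and no parallel edges. -/
lemma three_le_card_of_dep {V α : Type u} {M : Matroid α} {G : Graph V α}
    (h : IsGraphicRep G M) {v : Fin 5 → V} {g : Fin 10 → α} (hv : Function.Injective v)
    (hg : Function.Injective g) (hE : G.E = range g)
    (hinc : ∀ i, G.inc (g i) = s(v (kp i), v (kq i))) {D : Finset α} (hD : M.Dep D) :
    3 ≤ D.card := by
  classical
  obtain ⟨-, z, hz, hz0, hzD⟩ := (rep_of_graphic ((coe_univ_map hg).trans hE.symm) h D).1 hD
  have hbd := (mem_cyc_iff_bd hg hv (fun i _ => hinc i) hz.1).1 hz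
  obtain ⟨i, hi⟩ := Function.ne_iff.1 (comp_ne_zero hg hz0 hz.1)
  by_contra! hlt
  have hiD : g i ∈ D := by by_contra hn; exact hi (hzD _ (by simpa using hn))
  have hcard : (D.erase (g i)).card ≤ 1 := by rw [Finset.card_erase_of_mem hiD]; omega
  obtain ⟨j, hj⟩ : ∃ j, ∀ k, k ≠ i → k ≠ j → z (g k) = 0 := by
    by_cases hex : ∃ j, j ≠ i ∧ g j ∈ D
    · obtain ⟨j, hji, hjD⟩ := hex
      refine ⟨j, fun k hki hkj => hzD _ fun hk => hkj (hg ?_)⟩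
      exact Finset.card_le_one.1 hcard _ (by simp [hg.eq_iff, hki]; exact hk) _
        (by simp [hg.eq_iff, hji, hjD])
    · push Not at hex
      exact ⟨i, fun k hki _ => hzD _ (by simpa using hex k hki)⟩
  -- a vertex on the edge `i` but not on the edge `j`
  have hsep : ∀ i j : Fin 10, ∃ k, (if k = kp i then 1 else 0) + (if k = kq i then 1 else 0) =
      (1 : ZMod 2) ∧ (j ≠ i → (if k = kp j then 1 else 0) + (if k = kq j then 1 else 0) =
      (0 : ZMod 2)) := by decide
  obtain ⟨k, hk1, hk2⟩ := hsep i j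
  have := hbd k
  rw [bd, Finset.sum_eq_single i, hk1, mul_one] at this
  · exact hi this
  · intro l _ hl
    by_cases hlj : l = j
    · subst hlj; rw [hk2 hl, mul_zero]
    · simp [hj l hl hlj]
  · simp

lemma CutRep.dep_of_cut {α : Type u} {N : Matroid α} {g : Fin 10 → α} (h : CutRep N g)
    (I : Finset (Fin 10)) (x : Fin 10 → ZMod 2) (hx : Cut x) (hx0 : x ≠ 0)
    (hI : ∀ i ∉ I, x i = 0) : N.Dep (g '' I) :=
  (h.2.2 _).2 ⟨image_subset_range _ _, x, hx, hx0, fun i hi => hI i (by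
    rwa [h.1.mem_set_image, Finset.mem_coe] at hi)⟩

lemma CutRep.indep {α : Type u} {N : Matroid α} {g : Fin 10 → α} (h : CutRep N g)
    (I : Finset (Fin 10)) (hI : ∀ x, Cut x → (∀ i ∉ I, x i = 0) → x = 0) :
    N.Indep (g '' I) := by
  rw [← not_dep_iff (h.2.1 ▸ image_subset_range _ _), h.2.2]
  rintro ⟨-, x, hx, hx0, hxI⟩
  exact hx0 (hI x hx fun i hi => hxI i (by rwa [h.1.mem_set_image, Finset.mem_coe]))

lemma funext_fin_ten {x : Fin 10 → ZMod 2} (h0 : x 0 = 0) (h1 : x 1 = 0) (h2 : x 2 = 0)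
    (h3 : x 3 = 0) (h4 : x 4 = 0) (h5 : x 5 = 0) (h6 : x 6 = 0) (h7 : x 7 = 0)
    (h8 : x 8 = 0) (h9 : x 9 = 0) : x = 0 := by
  funext i
  fin_cases i <;> assumption

lemma Cut.eq_zero {x : Fin 10 → ZMod 2} (h : Cut x) (h0 : x 0 = 0) (h1 : x 1 = 0)
    (h2 : x 2 = 0) (h3 : x 3 = 0) : x = 0 := by
  obtain ⟨h4, h5, h6, h7, h8, h9⟩ := h
  simp only [h0, h1, h2, h3, add_zero] at h4 h5 h6 h7 h8 h9
  exact funext_fin_ten h0 h1 h2 h3 h4 h5 h6 h7 h8 h9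

/-- `K₅` has no bridges. -/
lemma Cut.eq_zero_of_single {x : Fin 10 → ZMod 2} (hx : Cut x) (i : Fin 10)
    (hi : ∀ j, j ≠ i → x j = 0) : x = 0 := by
  have key : ∀ (i : Fin 10) (a : ZMod 2), Cut (Pi.single i a) → a = 0 := by
    unfold Cut; decide
  have hxi : x = Pi.single i (x i) := by
    funext j
    by_cases hj : j = i
    · subst hj; simp
    · simp [hi j hj, hj]
  rw [hxi] at hx
  rw [hxi, key i _ hx, Pi.single_zero]

/-! ### `M*(K₅)` is not bicircular lift -/

/-- A set with two cycles contains, for each element `f`, a cycle avoiding `f`. -/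
lemma HasTwoCycles.exists_avoid {V α : Type u} {G : Graph V α} (hfin : G.E.Finite) {X : Set α}
    (h : G.HasTwoCycles X) (f : α) : ∃ C, G.IsCycle C ∧ C ⊆ X \ {f} := by
  classical
  obtain ⟨C₁, C₂, h1, h2, hne, hX1, hX2⟩ := h
  by_cases hf1 : f ∈ C₁
  swap
  · exact ⟨C₁, h1, subset_sdiff_singleton hX1 hf1⟩
  by_cases hf2 : f ∈ C₂
  swap
  · exact ⟨C₂, h2, subset_sdiff_singleton hX2 hf2⟩
  lift C₁ to Finset α using h1.2.1
  lift C₂ to Finset α using h2.2.1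
  have hF := hfin.coe_toFinset
  have hz := add_mem (IsCycle.chi_mem (F := hfin.toFinset) (by simpa using h1.1) h1)
    (IsCycle.chi_mem (F := hfin.toFinset) (by simpa using h2.1) h2)
  have h2' : ∀ a b : ZMod 2, a + b = 0 → a = b := by decide
  obtain ⟨C, hC, hCz⟩ := exists_cycle hF hz (by
    intro h0
    refine hne (congrArg _ (Finset.ext fun e => ?_))
    have he := h2' _ _ (congrFun h0 e)
    by_cases e1 : e ∈ C₁ <;> by_cases e2 : e ∈ C₂ <;> simp_all [chi])
  refine ⟨C, hC, fun e he => ⟨?_, ?_⟩⟩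
  · by_contra hn
    refine hCz e he ?_
    have e1 : e ∉ C₁ := fun h => hn (hX1 h)
    have e2 : e ∉ C₂ := fun h => hn (hX2 h)
    simp [chi_of_notMem e1, chi_of_notMem e2]
  · rintro rfl
    refine hCz e he ?_
    rw [Pi.add_apply, chi_of_mem (Finset.mem_coe.1 hf1), chi_of_mem (Finset.mem_coe.1 hf2)]
    exact CharTwo.add_self_eq_zero 1

lemma dep_iff_hasTwoCycles {V α : Type u} {G : Graph V α} {N : Matroid α}
    (h : IsLiftRep G N) (hfin : N.E.Finite) {X : Set α} (hX : X ⊆ N.E) :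
    N.Dep X ↔ G.HasTwoCycles X := by
  constructor
  · intro hd
    obtain ⟨C, hCX, hC⟩ := hd.exists_isCircuit_subset
    obtain ⟨-, C₁, C₂, h1, h2, hne, hs1, hs2⟩ := ((h.2 C).1 hC).prop
    exact ⟨C₁, C₂, h1, h2, hne, hs1.trans hCX, hs2.trans hCX⟩
  · intro ht
    have hsub : {Y | Y ⊆ X ∧ G.HasTwoCycles Y}.Finite :=
      (hfin.subset hX).finite_subsets.subset fun Y hY => hY.1
    obtain ⟨C, hC⟩ := hsub.exists_minimal ⟨X, Subset.rfl, ht⟩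
    have hCX := hC.prop.1
    have hcirc : Circuit N C := (h.2 C).2 ⟨⟨(hCX.trans hX).trans h.1.subset, hC.prop.2⟩,
      fun Y hY hYC => hC.2 ⟨hYC.trans hCX, hY.2⟩ hYC⟩
    exact hcirc.prop.superset hCX

/-- If `g '' I` and `g '' J` are dependent, and removing one element from each of them leaves
two sets with independent union and no common element other than `g k`, then `g k` is a loop of the
graph. -/
lemma isCycle_singleton {V α : Type u} {G : Graph V α} {N : Matroid α} (h : IsLiftRep G N)
    {g : Fin 10 → α} (hc : CutRep N g) {I J K : Finset (Fin 10)} {a b k : Fin 10}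
    (hI : N.Dep (g '' I)) (hJ : N.Dep (g '' J)) (hK : N.Indep (g '' K))
    (hIK : I.erase a ⊆ K) (hJK : J.erase b ⊆ K) (hIJ : I.erase a ∩ J.erase b ⊆ {k}) :
    G.IsCycle {g k} := by
  classical
  have hfin : N.E.Finite := hc.2.1 ▸ finite_range g
  have hsub : ∀ I : Finset (Fin 10), g '' I ⊆ N.E := fun I => hc.2.1 ▸ image_subset_range _ _
  have key : ∀ (I : Finset (Fin 10)) (a : Fin 10), N.Dep (g '' I) →
      ∃ C, G.IsCycle C ∧ C ⊆ g '' (I.erase a : Finset (Fin 10)) := by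
    intro I a hI
    obtain ⟨C, hC, hCI⟩ := HasTwoCycles.exists_avoid (h.1 ▸ hfin)
      ((dep_iff_hasTwoCycles h hfin (hsub I)).1 hI) (g a)
    refine ⟨C, hC, fun e he => ?_⟩
    obtain ⟨⟨i, hi, rfl⟩, hia⟩ := hCI he
    exact ⟨i, Finset.mem_erase.2 ⟨fun hh => hia (by simp [hh]), hi⟩, rfl⟩
  obtain ⟨C₁, h1, hs1⟩ := key I a hI
  obtain ⟨C₂, h2, hs2⟩ := key J b hJ
  have heq : C₁ = C₂ := by
    by_contra hne
    refine hK.not_dep ((dep_iff_hasTwoCycles h hfin (hsub K)).2 ⟨C₁, C₂, h1, h2, hne,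
      hs1.trans (image_mono (by exact_mod_cast hIK)),
      hs2.trans (image_mono (by exact_mod_cast hJK))⟩)
  have hsing : C₁ ⊆ {g k} := by
    intro e he
    obtain ⟨i, hi, rfl⟩ := hs1 he
    obtain ⟨j, hj, hji⟩ := hs2 (heq ▸ he)
    obtain rfl := hc.1 hji
    have := Finset.mem_singleton.1 (hIJ (Finset.mem_inter.2 ⟨hi, hj⟩))
    simp [this]
  rwa [(h1.2.2.1.subset_singleton_iff).1 hsing] at h1

lemma CutRep.not_isBicircularLift {α : Type u} {N : Matroid α} {g : Fin 10 → α}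
    (hc : CutRep N g) : ¬ IsBicircularLift N := by
  rintro ⟨V, G, h⟩
  have hS0 := hc.dep_of_cut {0, 1, 2, 3} ![1, 1, 1, 1, 0, 0, 0, 0, 0, 0]
    (by unfold Cut; decide) (by decide) (by decide)
  have hS1 := hc.dep_of_cut {0, 4, 5, 6} ![1, 0, 0, 0, 1, 1, 1, 0, 0, 0]
    (by unfold Cut; decide) (by decide) (by decide)
  have hS2 := hc.dep_of_cut {1, 4, 7, 8} ![0, 1, 0, 0, 1, 0, 0, 1, 1, 0]
    (by unfold Cut; decide) (by decide) (by decide)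
  have hsum : ∀ a b : ZMod 2, 0 = a + b → a = 0 → b = 0 := by decide
  have h0 : G.IsCycle {g 0} := by
    refine isCycle_singleton h hc (K := {0, 2, 3, 5, 6}) (a := 1) (b := 4) hS0 hS1
      (hc.indep _ fun x hx hI => ?_) (by decide) (by decide) (by decide)
    have z1 := hI 1 (by decide)
    obtain ⟨h4, h5, h6, h7, h8, h9⟩ := id hx
    rw [hI 4 (by decide)] at h4
    rw [hI 7 (by decide)] at h7
    rw [hI 8 (by decide)] at h8
    exact hx.eq_zero (hsum _ _ (h4.trans (add_comm _ _)) z1) z1 (hsum _ _ h7 z1) (hsum _ _ h8 z1)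
  have h1 : G.IsCycle {g 1} := by
    refine isCycle_singleton h hc (K := {1, 2, 3, 7, 8}) (a := 0) (b := 4) hS0 hS2
      (hc.indep _ fun x hx hI => ?_) (by decide) (by decide) (by decide)
    have z0 := hI 0 (by decide)
    obtain ⟨h4, h5, h6, h7, h8, h9⟩ := id hx
    rw [hI 4 (by decide)] at h4
    rw [hI 5 (by decide)] at h5
    rw [hI 6 (by decide)] at h6
    exact hx.eq_zero z0 (hsum _ _ h4 z0) (hsum _ _ h5 z0) (hsum _ _ h6 z0)
  have hind : N.Indep (g '' ({0, 1} : Finset (Fin 10))) := by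
    refine hc.indep _ fun x hx hI => ?_
    obtain ⟨h4, h5, h6, h7, h8, h9⟩ := id hx
    have z2 := hI 2 (by decide)
    rw [hI 5 (by decide)] at h5
    rw [hI 7 (by decide)] at h7
    exact hx.eq_zero (hsum _ _ (h5.trans (add_comm _ _)) z2)
      (hsum _ _ (h7.trans (add_comm _ _)) z2) z2 (hI 3 (by decide))
  refine hind.not_dep ((dep_iff_hasTwoCycles h (hc.2.1 ▸ finite_range g) hind.subset_ground).2
    ⟨_, _, h0, h1, ?_, by simp, by simp⟩)
  rw [Ne, singleton_eq_singleton_iff, hc.1.eq_iff]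
  decide

/-! ### `M*(K₅)` is not graphic -/

/-- Every bond of a graph representing `N` would have at least three elements, so the graph
would have at most `2 · 10 / 3` vertices, fewer than the rank 6 of `N` requires. -/
lemma CutRep.not_isGraphic {α : Type u} {N : Matroid α} {g : Fin 10 → α} (hc : CutRep N g)
    (h3 : ∀ D : Finset α, N✶.Dep D → 3 ≤ D.card) : ¬ IsGraphic N := by
  classical
  rintro ⟨V, H, h⟩
  obtain ⟨hg, hE, -⟩ := id hc
  set F : Finset α := Finset.univ.map ⟨g, hg⟩ with hFdef
  have hFcard : F.card = 10 := by simp [hFdef]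
  have hF : (F : Set α) = N.E := (coe_univ_map hg).trans hE.symm
  have hFH : (F : Set α) = H.E := hF.trans h.1
  have hrep := rep_of_graphic hFH h
  have hdual := hrep.dual hF fun z hz => (mem_cyc.1 hz).1
  let S : Finset V := F.biUnion fun e => (H.inc e).toFinset
  have hS : ∀ e ∈ F, ∀ v ∈ H.inc e, v ∈ S := fun e he v hv =>
    Finset.mem_biUnion.2 ⟨e, he, by simpa using hv⟩
  have hloop : ∀ e ∈ F, ∀ v, H.inc e ≠ s(v, v) := by
    intro e he v hev
    have he0 : {e} ⊆ F := by simpa using he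
    obtain ⟨z, hz, hz0, hze⟩ := exists_cyc_of_card H.inc he0 {v}
      (by simp [hev]) (by simp) (by simp)
    obtain ⟨i, -, rfl⟩ := Finset.mem_map.1 he
    have hd : N.Dep {g i} := (hrep _).2 ⟨by simp [hE], z, hz, hz0, by simpa using hze⟩
    obtain ⟨-, x, hx, hx0, hxi⟩ := (hc.2.2 _).1 hd
    exact hx0 (hx.eq_zero_of_single i fun j hj => hxi j (by simpa [hg.eq_iff] using hj))
  have hdeg : ∀ v ∈ S, 3 ≤ ∑ e ∈ F, cnt v (H.inc e) := by
    intro v hv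
    obtain ⟨f, hf, hvf⟩ := Finset.mem_biUnion.1 hv
    replace hvf : v ∈ H.inc f := by simpa using hvf
    have hone : ∀ e ∈ F, v ∈ H.inc e → cnt v (H.inc e) = 1 := by
      intro e he hve
      obtain ⟨w, hw⟩ := hve
      have hvw : v ≠ w := fun hh => hloop e he v (by rw [hw, ← hh])
      rw [hw, cnt_mk]; simp [hvw]
    let D : Finset α := F.filter fun e => v ∈ H.inc e
    have hval : ∀ e ∈ F, chi D e = (cnt v (H.inc e) : ZMod 2) := by
      intro e he
      by_cases hve : v ∈ H.inc e
      · rw [chi_of_mem (Finset.mem_filter.2 ⟨he, hve⟩), hone e he hve, Nat.cast_one]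
      · have heD : e ∉ D := fun hh => hve (Finset.mem_filter.1 hh).2
        rw [chi_of_notMem heD, cnt_eq_zero hve,
          Nat.cast_zero]
    have hdep : N✶.Dep D := by
      refine (hdual D).2 ⟨?_, chi D, ⟨?_, ?_⟩, chi_ne_zero ⟨f, Finset.mem_filter.2 ⟨hf, hvf⟩⟩,
        fun e he => chi_of_notMem (by simpa using he)⟩
      · rw [dual_ground, ← hF]; exact_mod_cast Finset.filter_subset _ _
      · exact fun e he => chi_of_notMem fun hh => he (Finset.mem_filter.1 hh).1
      · intro z hz
        rw [← hz.2 v]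
        exact Finset.sum_congr rfl fun e he => by rw [hval e he, mul_comm]
    calc 3 ≤ D.card := h3 D hdep
      _ = ∑ e ∈ D, 1 := by simp
      _ ≤ ∑ e ∈ D, cnt v (H.inc e) :=
        Finset.sum_le_sum fun e he => cnt_pos (Finset.mem_filter.1 he).2
      _ ≤ ∑ e ∈ F, cnt v (H.inc e) := Finset.sum_le_sum_of_subset (Finset.filter_subset _ _)
  have hScard : S.card ≤ 6 := by
    have h1 : S.card * 3 ≤ ∑ v ∈ S, ∑ e ∈ F, cnt v (H.inc e) := by
      simpa using Finset.sum_le_sum hdeg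
    rw [Finset.sum_comm, Finset.sum_congr rfl fun e he => sum_cnt (hS e he)] at h1
    simp [hFcard] at h1
    omega
  let B : Finset (Fin 10) := {4, 5, 6, 7, 8, 9}
  have hB : N.Indep (g '' B) := hc.indep B fun x hx hI => hx.eq_zero (hI 0 (by decide))
    (hI 1 (by decide)) (hI 2 (by decide)) (hI 3 (by decide))
  have hBF : B.map ⟨g, hg⟩ ⊆ F := Finset.map_subset_map.2 (Finset.subset_univ B)
  obtain ⟨z, hz, hz0, hzB⟩ := exists_cyc_of_card H.inc hBF S (fun e he => hS e (hBF he))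
    (by simp [B]) (by rw [Finset.card_map]; exact hScard)
  exact hB.not_dep ((hrep _).2 ⟨hB.subset_ground, z, hz, hz0, fun e he => hzB e (by
    simpa using he)⟩)

/-! ### Proper minors of `M*(K₅)` are graphic -/

/-- First ends of the edges of a graph `H` with `M(H) = M*(K₅) ＼ {0}`: the graph `K₄` on
the vertices 3, 4, 5, 6 with the edges of the triangle 456 subdivided by the vertices 0, 1, 2.
The deleted edge 0 has a junk value. -/
def dp : Fin 10 → Fin 7 := ![0, 0, 1, 2, 0, 1, 2, 3, 3, 3]

/-- Second ends of the edges in `dp`. -/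
def dq : Fin 10 → Fin 7 := ![0, 6, 4, 5, 4, 5, 6, 4, 6, 5]

/-- First ends of the edges of a graph `H` with `M(H) = M*(K₅) ／ {0}`: the triangular prism with
triangles 012 and 345. The contracted edge 0 has a junk value. -/
def cp : Fin 10 → Fin 6 := ![0, 0, 0, 1, 3, 3, 4, 0, 2, 1]

/-- Second ends of the edges in `cp`. -/
def cq : Fin 10 → Fin 6 := ![0, 2, 1, 2, 5, 4, 5, 3, 5, 4]

lemma cut_iff_del {x : Fin 10 → ZMod 2} (h0 : x 0 = 0) : Cut x ↔ ∀ j, bd dp dq x j = 0 := by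
  simp only [Cut, Fin.forall_fin_succ, bd, sum_fin_ten]
  simp [dp, dq, h0]
  grind

lemma cut_iff_con {x : Fin 10 → ZMod 2} (h0 : x 0 = 0) :
    (∃ c, Cut (Function.update x 0 c)) ↔ ∀ j, bd cp cq x j = 0 := by
  simp only [Cut, Fin.forall_fin_succ, bd, sum_fin_ten]
  simp [cp, cq, h0]
  constructor
  · grind
  · intro h
    refine ⟨x 4 + x 1, ?_⟩
    grind


lemma CutRep.ground_diff {α : Type u} {N : Matroid α} {g : Fin 10 → α} (hc : CutRep N g) :
    N.E \ {g 0} = g '' (Finset.univ.erase (0 : Fin 10) : Finset (Fin 10)) := by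
  ext e
  rw [hc.2.1]
  constructor
  · rintro ⟨⟨i, rfl⟩, hi⟩
    exact ⟨i, by simpa [hc.1.eq_iff] using hi, rfl⟩
  · rintro ⟨i, hi, rfl⟩
    exact ⟨⟨i, rfl⟩, by simpa [hc.1.eq_iff] using hi⟩

lemma CutRep.isGraphic_delete {α : Type u} {N : Matroid α} {g : Fin 10 → α} (hc : CutRep N g) :
    IsGraphic (N ＼ {g 0}) := by
  refine isGraphic_of_bd hc.1 dp dq (Finset.univ.erase 0) hc.ground_diff fun X hX => ?_
  have hX0 : g 0 ∉ X := fun h => (hX h).2 rfl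
  have hXr : X ⊆ range g := fun e he => hc.2.1 ▸ (hX he).1
  rw [delete_dep_iff, and_iff_left (disjoint_singleton_right.2 hX0), hc.2.2, and_iff_right hXr]
  constructor
  · rintro ⟨x, hx, hx0, hxX⟩
    exact ⟨x, by simpa using hxX 0 hX0, hx0, (cut_iff_del (hxX 0 hX0)).1 hx, hxX⟩
  · rintro ⟨x, hx1, hx0, hx, hxX⟩
    exact ⟨x, (cut_iff_del (hxX 0 hX0)).2 hx, hx0, hxX⟩

lemma CutRep.isGraphic_contract {α : Type u} {N : Matroid α} {g : Fin 10 → α}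
    (hc : CutRep N g) : IsGraphic (N ／ {g 0}) := by
  classical
  have hind : N.Indep {g 0} := by
    have := hc.indep {0} fun x hx hI => hx.eq_zero_of_single 0 fun j hj => hI j (by simpa using hj)
    simpa using this
  refine isGraphic_of_bd hc.1 cp cq (Finset.univ.erase 0) hc.ground_diff fun X hX => ?_
  have hX0 : g 0 ∉ X := fun h => (hX h).2 rfl
  have hXr : X ∪ {g 0} ⊆ range g :=
    union_subset (fun e he => hc.2.1 ▸ (hX he).1) (by simp)
  rw [hind.contract_dep_iff, and_iff_right (disjoint_singleton_right.2 hX0), hc.2.2,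
    and_iff_right hXr]
  constructor
  · rintro ⟨x, hx, hx0, hxX⟩
    refine ⟨Function.update x 0 0, by simp, fun h0 => hx0 ?_,
      (cut_iff_con (by simp)).1 ⟨x 0, by simpa using hx⟩, fun i hi => ?_⟩
    · refine hx.eq_zero_of_single 0 fun j hj => ?_
      have := congrFun h0 j
      rwa [Function.update_of_ne hj] at this
    · by_cases h : i = 0
      · subst h; simp
      · rw [Function.update_of_ne h]
        exact hxX i (by simp [hi, hc.1.eq_iff, h])
  · rintro ⟨x, hx1, hx0, hx, hxX⟩
    have h0 := hxX 0 hX0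
    obtain ⟨c, hcut⟩ := (cut_iff_con h0).2 hx
    refine ⟨_, hcut, fun hz => hx0 (funext fun i => ?_), fun i hi => ?_⟩
    · by_cases h : i = 0
      · subst h; exact h0
      · have := congrFun hz i
        rwa [Function.update_of_ne h] at this
    · have hi' : i ≠ 0 ∧ g i ∉ X := by simpa [hc.1.eq_iff] using hi
      rw [Function.update_of_ne hi'.1]
      exact hxX i hi'.2

theorem statement_2 {α : Type u} (N : Matroid α)
    (h : ∃ (V : Type u) (G : Graph V α), IsK5 G ∧ IsGraphicRep G N✶) :
    ExcludedMinorBL N ∧ ¬ IsBicircularLift N := by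
  obtain ⟨V, G, hK, hG⟩ := h
  have henum : ∀ e ∈ N.E, ∃ g, CutRep N g ∧ g 0 = e := by
    intro e he
    obtain ⟨v, g, hv, hg, hE, h0, hinc⟩ := hK.exists_enum (e := e) (hG.1 ▸ he)
    exact ⟨g, cutRep_of_enum hG hv hg hE hinc, h0⟩
  obtain ⟨e, he⟩ : G.E.Nonempty := by
    obtain ⟨v, -, ed, -, hE, -⟩ := hK
    exact hE ▸ ⟨_, ⟨s(0, 1), by simp⟩, rfl⟩
  obtain ⟨v, g, hv, hg, hE, -, hinc⟩ := hK.exists_enum he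
  have hc := cutRep_of_enum hG hv hg hE hinc
  have hfin : N.E.Finite := hc.2.1 ▸ finite_range g
  have hnb := hc.not_isBicircularLift
  have hng := hc.not_isGraphic fun D hD => three_le_card_of_dep hG hv hg hE hinc hD
  refine ⟨⟨fun hBL => hBL.elim hng hnb, ?_⟩, hnb⟩
  rintro N' ⟨⟨C, D, rfl⟩, hne⟩
  left
  change IsGraphic ((N ／ C) ＼ D)
  change (N ／ C) ＼ D ≠ N at hne
  by_cases hC : Disjoint C N.E
  · rw [contract_eq_self_iff.2 hC] at hne ⊢
    obtain ⟨e, heD, heE⟩ := not_disjoint_iff.1 fun hD => hne (delete_eq_self_iff.2 hD)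
    obtain ⟨g, hc, rfl⟩ := henum e heE
    rw [← insert_eq_of_mem heD, ← singleton_union, ← delete_delete]
    exact hc.isGraphic_delete.del D
  · obtain ⟨e, heC, heE⟩ := not_disjoint_iff.1 hC
    obtain ⟨g, hc, rfl⟩ := henum e heE
    rw [← insert_eq_of_mem heC, ← singleton_union, ← contract_contract]
    exact (hc.isGraphic_contract.contract (hfin.subset (by simp)) C).del D

end BLFormal
end
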